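/- Let R be a commutative Noetherian ring and 𝔞 a proper ideal of R such that either dim R/𝔞 ≤ 1, or dim R ≤ 2, or ara(𝔞) ≤ 1. Let M be an R-module such that Ext^i_R(R/𝔞, M) is a finitely generated R-module for every i ≥ 0. Then H^i_𝔞(M) is 𝔞-cofinite for every i ≥ 0; in particular, the set of associated primes Ass_R H^i_𝔞(M) is finite for every i ≥ 0. -/

import Mathlib

open CategoryTheory

universe u

/-- The `R`-module `Ext^i_R(N, M)` for two `R`-modules (objects of `ModuleCat R`). -/
noncomputable def extObj {R : Type u} [CommRing R] (N M : ModuleCat.{u} R) (i : ℕ) :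
    ModuleCat.{u} R :=
  ((Ext R (ModuleCat.{u} R) i).obj (Opposite.op N)).obj M

/-- The `R`-module `Ext^i_R(R/𝔞, M)`. -/
noncomputable def extIdeal {R : Type u} [CommRing R] (𝔞 : Ideal R) (i : ℕ)
    (M : ModuleCat.{u} R) : ModuleCat.{u} R :=
  extObj (ModuleCat.of R (R ⧸ 𝔞)) M i

/-- An `R`-module `M` is `𝔞`-cofinite if `Supp_R M ⊆ V(𝔞)` and `Ext^i_R(R/𝔞, M)` is a finitely
generated `R`-module for every `i ≥ 0`. -/
def IsCofinite {R : Type u} [CommRing R] (𝔞 : Ideal R) (M : ModuleCat.{u} R) : Prop :=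
  Module.support R M ⊆ PrimeSpectrum.zeroLocus (𝔞 : Set R) ∧
    ∀ i : ℕ, Module.Finite R (extIdeal 𝔞 i M)

/-- The Krull dimension `dim_R M` of an `R`-module `M`: the Krull dimension of its support,
i.e. the supremum of `dim R/𝔭` over primes `𝔭` in the support of `M`. -/
noncomputable def moduleDim (R : Type u) [CommRing R] (M : Type u) [AddCommGroup M]
    [Module R M] : WithBot ℕ∞ :=
  Order.krullDim (Module.support R M)

/-- An `R`-module `M` is in `FD_{≤n}` if there is a finitely generated submodule `N ⊆ M`
with `dim_R (M/N) ≤ n`. -/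
def MemFD (R : Type u) [CommRing R] (n : ℕ) (M : Type u) [AddCommGroup M] [Module R M] : Prop :=
  ∃ N : Submodule R M, N.FG ∧ moduleDim R (M ⧸ N) ≤ (n : WithBot ℕ∞)

/-- An `R`-module `M` is `𝔞`-torsion if every element is annihilated by some power of `𝔞`. -/
def IsTorsionIdeal {R : Type u} [CommRing R] (𝔞 : Ideal R) (M : Type u) [AddCommGroup M]
    [Module R M] : Prop :=
  ∀ m : M, ∃ n : ℕ, ∀ a ∈ 𝔞 ^ n, a • m = 0

/-- The arithmetic rank of an ideal `𝔞`: the least `n` such that there exist `a₁, …, aₙ ∈ R`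
with `Rad (a₁, …, aₙ) = Rad 𝔞`. -/
noncomputable def arithRank {R : Type u} [CommRing R] (𝔞 : Ideal R) : ℕ :=
  sInf {n : ℕ | ∃ f : Fin n → R, (Ideal.span (Set.range f)).radical = 𝔞.radical}

namespace CategoryTheory.ProjectiveResolution
open Abelian Opposite
variable {R : Type u} [CommRing R]

/-- The morphism of Hom-complexes induced by a morphism of chain complexes. -/
noncomputable def linearYonedaMap {P Q : ChainComplex (ModuleCat.{u} R) ℕ} (φ : P ⟶ Q)
    (Y : ModuleCat.{u} R) : Q.linearYonedaObj R Y ⟶ P.linearYonedaObj R Y :=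
  (HomologicalComplex.unopFunctor _ _).map
    ((((linearYoneda R (ModuleCat.{u} R)).obj Y).rightOp.mapHomologicalComplex _).map φ).op

lemma isoExt_inv_naturality {X X' : ModuleCat.{u} R} (f : X' ⟶ X) (P : ProjectiveResolution X)
    (P' : ProjectiveResolution X') (φ : P'.complex ⟶ P.complex)
    (w : φ.f 0 ≫ P.π.f 0 = P'.π.f 0 ≫ f) (n : ℕ) (Y : ModuleCat.{u} R) :
    (P.isoExt (R := R) n Y).inv ≫ ((Ext R (ModuleCat.{u} R) n).map f.op).app Y =
      HomologicalComplex.homologyMap (linearYonedaMap φ Y) n ≫ (P'.isoExt n Y).inv := by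
  have h2 := congrArg Quiver.Hom.unop (ProjectiveResolution.isoLeftDerivedObj_hom_naturality
    f P' P φ w ((linearYoneda R (ModuleCat.{u} R)).obj Y).rightOp n)
  have h4 := congrArg Quiver.Hom.unop
    (HomologicalComplex.homologyOp_hom_naturality (linearYonedaMap φ Y) n)
  refine (Category.assoc _ _ _).trans ?_
  refine (congrArg (_ ≫ ·) h2).trans ?_
  refine (Category.assoc _ _ _).symm.trans ?_
  refine (congrArg (fun g => g ≫ (P'.isoLeftDerivedObj
    ((linearYoneda R (ModuleCat.{u} R)).obj Y).rightOp n).hom.unop) h4).trans ?_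
  exact Category.assoc _ _ _

/-- Apply the inclusion of cycles of a Hom-complex. -/
noncomputable def cyclesHom {X : ModuleCat.{u} R} (P : ProjectiveResolution X)
    (Y : ModuleCat.{u} R) (n : ℕ) :
    (P.complex.linearYonedaObj R Y).cycles n →ₗ[R] (P.complex.X n ⟶ Y) :=
  ((P.complex.linearYonedaObj R Y).iCycles n).hom

lemma d_comp_cyclesHom {X : ModuleCat.{u} R} (P : ProjectiveResolution X)
    (Y : ModuleCat.{u} R) (n : ℕ) (z) : P.complex.d (n + 1) n ≫ P.cyclesHom Y n z = 0 := by
  have h := (P.complex.linearYonedaObj R Y).iCycles_d n (n + 1)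
  exact DFunLike.congr_fun (congrArg ModuleCat.Hom.hom h) z

/-- The comparison between `Ext` as a left derived functor and `Ext` in the derived category,
on cocycles. -/
noncomputable def cyclesToExt {X : ModuleCat.{u} R} (P : ProjectiveResolution X)
    (Y : ModuleCat.{u} R) (n : ℕ) :
    (P.complex.linearYonedaObj R Y).cycles n →ₗ[R] Abelian.Ext X Y n where
  toFun z := P.extMk (P.cyclesHom Y n z) (n + 1) rfl (P.d_comp_cyclesHom Y n z)
  map_add' a b := by
    rw [add_extMk]
    congr 1
    exact map_add _ _ _
  map_smul' r a := by
    rw [RingHom.id_apply, Ext.smul_eq_comp_mk₀, extMk_comp_mk₀]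
    congr 1
    rw [map_smul, Linear.comp_smul, Category.comp_id]

lemma cyclesToExt_naturality {X X' : ModuleCat.{u} R} (f : X' ⟶ X) (P : ProjectiveResolution X)
    (P' : ProjectiveResolution X') (φ : Hom P' P f) (n : ℕ) (Y : ModuleCat.{u} R) (z) :
    P'.cyclesToExt Y n ((HomologicalComplex.cyclesMap (linearYonedaMap φ.hom Y) n).hom z) =
      (Ext.mk₀ f).comp (P.cyclesToExt Y n z) (zero_add n) := by
  refine Eq.trans ?_ (mk₀_comp_extMk (n := n) _ (n + 1) rfl (P.d_comp_cyclesHom Y n z) φ).symm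
  have h := DFunLike.congr_fun (congrArg ModuleCat.Hom.hom
    (HomologicalComplex.cyclesMap_i (linearYonedaMap φ.hom Y) n)) z
  dsimp only [cyclesToExt, LinearMap.coe_mk, AddHom.coe_mk]
  congr 1

lemma exists_cyclesHom_eq {X : ModuleCat.{u} R} (P : ProjectiveResolution X)
    (Y : ModuleCat.{u} R) (n : ℕ) (f : P.complex.X n ⟶ Y) (hf : P.complex.d (n + 1) n ≫ f = 0) :
    ∃ z, P.cyclesHom Y n z = f := by
  let k : ModuleCat.of R R ⟶ (P.complex.linearYonedaObj R Y).X n :=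
    ModuleCat.ofHom (LinearMap.toSpanSingleton R (P.complex.X n ⟶ Y) f)
  have hk : k ≫ (P.complex.linearYonedaObj R Y).d n (n + 1) = 0 := by
    ext
    show P.complex.d (n + 1) n ≫ ((1 : R) • f) = 0
    rw [one_smul, hf]
  let l := HomologicalComplex.liftCycles _ k (n + 1) (by simp) hk
  refine ⟨l.hom (1 : R), ?_⟩
  have h := DFunLike.congr_fun (congrArg ModuleCat.Hom.hom
    (HomologicalComplex.liftCycles_i _ k (n + 1) (by simp) hk)) (1 : R)
  exact h.trans (one_smul R f)

lemma cyclesToExt_surjective {X : ModuleCat.{u} R} (P : ProjectiveResolution X)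
    (Y : ModuleCat.{u} R) (n : ℕ) : Function.Surjective (P.cyclesToExt Y n) := by
  intro α
  obtain ⟨f, hf, rfl⟩ := P.extMk_surjective α (n + 1) rfl
  obtain ⟨z, rfl⟩ := P.exists_cyclesHom_eq Y n f hf
  exact ⟨z, rfl⟩

lemma cyclesHom_injective {X : ModuleCat.{u} R} (P : ProjectiveResolution X)
    (Y : ModuleCat.{u} R) (n : ℕ) : Function.Injective (P.cyclesHom Y n) := 
  (ModuleCat.mono_iff_injective ((P.complex.linearYonedaObj R Y).iCycles n)).1 inferInstance

lemma extMk_zero_degree_eq_zero_iff {X Y : ModuleCat.{u} R} (P : ProjectiveResolution X)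
    (f : P.complex.X 0 ⟶ Y) (m : ℕ) (hm : 0 + 1 = m) (hf : P.complex.d m 0 ≫ f = 0) :
    P.extMk f m hm hf = 0 ↔ f = 0 := by
  refine ⟨fun h ↦ ?_, fun h ↦ ?_⟩
  · simp only [← P.extEquivCohomologyClass.apply_eq_iff_eq,
      extEquivCohomologyClass_extMk, extEquivCohomologyClass_zero,
      CochainComplex.HomComplex.CohomologyClass.mk_eq_zero_iff] at h
    rw [CochainComplex.HomComplex.Cocycle.toSingleMk_mem_coboundaries_iff _ _ _ _ _ 1 (by lia)] at h
    obtain ⟨g, hg⟩ := h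
    have h0 : P.cochainComplex.d (-((0 : ℕ) : ℤ)) 1 = 0 :=
      (P.cochainComplex.isZero_of_isStrictlyLE 0 1 (by lia)).eq_of_tgt _ _
    rw [h0, Limits.zero_comp] at hg
    rw [← cancel_epi (P.cochainComplexXIso (-(0 : ℕ)) 0 rfl).hom, ← hg, Limits.comp_zero]
  · subst h
    exact P.extMk_zero m hm

lemma homologyπ_eq_zero_iff {X : ModuleCat.{u} R} (P : ProjectiveResolution X)
    (Y : ModuleCat.{u} R) (n m : ℕ) (hm : (ComplexShape.up ℕ).prev n = m) (z) :
    ((P.complex.linearYonedaObj R Y).homologyπ n).hom z = 0 ↔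
      ∃ g : P.complex.X m ⟶ Y, P.complex.d n m ≫ g = P.cyclesHom Y n z := by
  have hex := ShortComplex.exact_of_g_is_cokernel (ShortComplex.mk _ _
    ((P.complex.linearYonedaObj R Y).toCycles_comp_homologyπ m n))
    ((P.complex.linearYonedaObj R Y).homologyIsCokernel m n hm)
  rw [ShortComplex.moduleCat_exact_iff] at hex
  have key : ∀ g, P.cyclesHom Y n (((P.complex.linearYonedaObj R Y).toCycles m n).hom g) =
      P.complex.d n m ≫ g := fun g ↦ DFunLike.congr_fun (congrArg ModuleCat.Hom.hom
    ((P.complex.linearYonedaObj R Y).toCycles_i m n)) g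
  refine ⟨fun h ↦ ?_, fun ⟨g, hg⟩ ↦ ?_⟩
  · obtain ⟨g, hg⟩ := hex z h
    exact ⟨g, (key g).symm.trans (congrArg (P.cyclesHom Y n) hg)⟩
  · have : ((P.complex.linearYonedaObj R Y).toCycles m n).hom g = z :=
      P.cyclesHom_injective Y n ((key g).trans hg)
    rw [← this]
    exact DFunLike.congr_fun (congrArg ModuleCat.Hom.hom
      ((P.complex.linearYonedaObj R Y).toCycles_comp_homologyπ m n)) g

lemma cyclesToExt_eq_zero_iff {X : ModuleCat.{u} R} (P : ProjectiveResolution X)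
    (Y : ModuleCat.{u} R) (n : ℕ) (z) : P.cyclesToExt Y n z = 0 ↔
     ((P.complex.linearYonedaObj R Y).homologyπ n).hom z = 0 := by
  rcases n with _ | n
  · rw [homologyπ_eq_zero_iff P Y 0 0 (by simp)]
    refine (P.extMk_zero_degree_eq_zero_iff _ 1 rfl (P.d_comp_cyclesHom Y 0 z)).trans ⟨fun h ↦ ⟨0, ?_⟩, fun ⟨g, hg⟩ ↦ ?_⟩
    · rw [h, Limits.comp_zero]
    · rw [← hg, P.complex.shape _ _ (by simp), Limits.zero_comp]
  · rw [homologyπ_eq_zero_iff P Y (n + 1) n (by simp)]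
    exact P.extMk_eq_zero_iff _ (n + 2) rfl (P.d_comp_cyclesHom Y (n + 1) z) n rfl

/-- The cohomology of the Hom-complex of a projective resolution computes `Ext`. -/
noncomputable def homologyEquivExt {X : ModuleCat.{u} R} (P : ProjectiveResolution X)
    (Y : ModuleCat.{u} R) (n : ℕ) :
    (P.complex.linearYonedaObj R Y).homology n ≃ₗ[R] Abelian.Ext X Y n :=
  have hπ : Function.Surjective ((P.complex.linearYonedaObj R Y).homologyπ n).hom :=
    (ModuleCat.epi_iff_surjective _).1 inferInstance
  have hker : LinearMap.ker ((P.complex.linearYonedaObj R Y).homologyπ n).hom =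
      LinearMap.ker (P.cyclesToExt Y n) := by
    ext z
    exact (P.cyclesToExt_eq_zero_iff Y n z).symm
  (LinearMap.quotKerEquivOfSurjective _ hπ).symm ≪≫ₗ Submodule.quotEquivOfEq _ _ hker ≪≫ₗ
    LinearMap.quotKerEquivOfSurjective _ (P.cyclesToExt_surjective Y n)

lemma homologyEquivExt_homologyπ {X : ModuleCat.{u} R} (P : ProjectiveResolution X)
    (Y : ModuleCat.{u} R) (n : ℕ) (z) :
    P.homologyEquivExt Y n (((P.complex.linearYonedaObj R Y).homologyπ n).hom z) =
      P.cyclesToExt Y n z := by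
  have hπ : Function.Surjective ((P.complex.linearYonedaObj R Y).homologyπ n).hom :=
    (ModuleCat.epi_iff_surjective _).1 inferInstance
  have h : (LinearMap.quotKerEquivOfSurjective _ hπ).symm
      (((P.complex.linearYonedaObj R Y).homologyπ n).hom z) = Submodule.Quotient.mk z :=
    (LinearEquiv.symm_apply_eq _).2 rfl
  simp only [homologyEquivExt, LinearEquiv.trans_apply]
  erw [h]
  rfl

lemma homologyEquivExt_naturality {X X' : ModuleCat.{u} R} (f : X' ⟶ X)
    (P : ProjectiveResolution X) (P' : ProjectiveResolution X') (φ : Hom P' P f) (n : ℕ)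
    (Y : ModuleCat.{u} R) (z) :
    P'.homologyEquivExt Y n ((HomologicalComplex.homologyMap (linearYonedaMap φ.hom Y) n).hom z) =
      (Ext.mk₀ f).comp (P.homologyEquivExt Y n z) (zero_add n) := by
  have hπ : Function.Surjective ((P.complex.linearYonedaObj R Y).homologyπ n).hom :=
    (ModuleCat.epi_iff_surjective _).1 inferInstance
  obtain ⟨z, rfl⟩ := hπ z
  have h := DFunLike.congr_fun (congrArg ModuleCat.Hom.hom
    (HomologicalComplex.homologyπ_naturality (linearYonedaMap φ.hom Y) n)) z
  refine (congrArg (P'.homologyEquivExt Y n) h).trans ?_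
  refine (P'.homologyEquivExt_homologyπ Y n _).trans ?_
  rw [homologyEquivExt_homologyπ]
  exact P.cyclesToExt_naturality f P' φ n Y z

end CategoryTheory.ProjectiveResolution

section
open Abelian Opposite
variable {R : Type u} [CommRing R]

/-- The comparison between the derived functor `Ext` and `Ext` in the derived category. -/
noncomputable def derivedExtEquiv (X Y : ModuleCat.{u} R) (n : ℕ) :
    ((_root_.Ext R (ModuleCat.{u} R) n).obj (op X)).obj Y ≃ₗ[R] Abelian.Ext X Y n :=
  ((projectiveResolution X).isoExt n Y).toLinearEquiv ≪≫ₗ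
    (projectiveResolution X).homologyEquivExt Y n

lemma derivedExtEquiv_naturality {X X' : ModuleCat.{u} R} (f : X' ⟶ X) (Y : ModuleCat.{u} R)
    (n : ℕ) (z) :
    derivedExtEquiv X' Y n ((((_root_.Ext R (ModuleCat.{u} R) n).map f.op).app Y).hom z) =
      (Ext.mk₀ f).comp (derivedExtEquiv X Y n z) (zero_add n) := by
  let P := projectiveResolution X
  let P' := projectiveResolution X'
  let φ : ProjectiveResolution.Hom P' P f :=
    { hom := ProjectiveResolution.lift f P' P
      hom_f_zero_comp_π_f_zero := by
        have := ProjectiveResolution.lift_commutes_zero f P' P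
        simpa using this }
  have h := P.isoExt_inv_naturality f P' φ.hom φ.hom_f_zero_comp_π_f_zero n Y
  obtain ⟨z, rfl⟩ := (P.isoExt n Y).toLinearEquiv.symm.surjective z
  have h1 := DFunLike.congr_fun (congrArg ModuleCat.Hom.hom h) z
  have h2 : derivedExtEquiv X Y n ((P.isoExt n Y).toLinearEquiv.symm z) =
      P.homologyEquivExt Y n z :=
    congrArg (P.homologyEquivExt Y n) ((P.isoExt n Y).toLinearEquiv.apply_symm_apply z)
  rw [h2, ← P.homologyEquivExt_naturality f P' φ]
  refine (congrArg (derivedExtEquiv X' Y n) h1).trans ?_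
  exact congrArg (P'.homologyEquivExt Y n) ((P'.isoExt n Y).toLinearEquiv.apply_symm_apply _)

end

section ModuleLemmas
variable {R : Type*} [CommRing R] {A : Type*} [AddCommGroup A] [Module R A]

/-- A module on which `x` acts locally nilpotently is Artinian if the kernel of `x` is. -/
lemma isArtinian_of_torsionBy (x : R) (hx : ∀ m : A, ∃ n : ℕ, x ^ n • m = 0)
    [IsArtinian R (Submodule.torsionBy R A x)] : IsArtinian R A := by
  let F : ℕ → Submodule R A → Submodule R (Submodule.torsionBy R A x) := fun n Y ↦
    (Y.map (LinearMap.lsmul R A (x ^ n))).comap (Submodule.torsionBy R A x).subtype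
  have hF : ∀ n Y k, k ∈ F n Y ↔ ∃ y ∈ Y, x ^ n • y = (k : A) := fun n Y k ↦ Iff.rfl
  have hFn : ∀ n n' Y, n ≤ n' → F n' Y ≤ F n Y := by
    intro n n' Y hn k hk
    obtain ⟨y, hy, h⟩ := (hF _ _ _).1 hk
    refine (hF _ _ _).2 ⟨x ^ (n' - n) • y, Y.smul_mem _ hy, ?_⟩
    rw [smul_smul, ← pow_add, Nat.add_sub_cancel' hn, h]
  have hFY : ∀ n Y Y', Y' ≤ Y → F n Y' ≤ F n Y := fun n Y Y' h k ⟨y, hy, e⟩ ↦ ⟨y, h hy, e⟩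
  have hle : ∀ Y Y', Y' ≤ Y → (∀ n, F n Y = F n Y') → Y ≤ Y' := by
    intro Y Y' hYY h y hy
    obtain ⟨n, hn⟩ := hx y
    induction n generalizing y with
    | zero => simp only [pow_zero, one_smul] at hn; rw [hn]; exact zero_mem _
    | succ n ih =>
      have hk : x ^ n • y ∈ Submodule.torsionBy R A x := by
        rw [Submodule.mem_torsionBy_iff, smul_smul, ← pow_succ', hn]
      have : (⟨_, hk⟩ : Submodule.torsionBy R A x) ∈ F n Y' := h n ▸ (hF _ _ _).2 ⟨y, hy, rfl⟩
      obtain ⟨y', hy', e⟩ := (hF _ _ _).1 this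
      have := ih (y := y - y') (sub_mem hy (hYY hy')) (by rw [smul_sub, e, sub_self])
      simpa using add_mem this hy'
  refine monotone_stabilizes_iff_artinian.1 fun f ↦ ?_
  have hf : ∀ k l, k ≤ l → OrderDual.ofDual (f l) ≤ OrderDual.ofDual (f k) := fun k l h ↦ f.2 h
  obtain ⟨_, ⟨⟨n₀, k₀⟩, rfl⟩, hmin⟩ := IsArtinian.set_has_minimal
    (Set.range fun p : ℕ × ℕ ↦ F p.1 (OrderDual.ofDual (f p.2))) (Set.range_nonempty _)
  have hlarge : ∀ n k, n₀ ≤ n → k₀ ≤ k → F n (OrderDual.ofDual (f k)) =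
      F n₀ (OrderDual.ofDual (f k₀)) := fun n k hn hk ↦ by
    refine le_antisymm ((hFn _ _ _ hn).trans (hFY _ _ _ (hf _ _ hk))) ?_
    by_contra hcon
    exact hmin _ ⟨(n, k), rfl⟩
      (lt_of_le_not_ge ((hFn _ _ _ hn).trans (hFY _ _ _ (hf _ _ hk))) hcon)
  have hstab : ∀ n, ∃ k, ∀ l, k ≤ l → F n (OrderDual.ofDual (f k)) = F n (OrderDual.ofDual (f l)) :=
    fun n ↦ by
      let g : ℕ →o (Submodule R (Submodule.torsionBy R A x))ᵒᵈ :=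
        ⟨fun k ↦ OrderDual.toDual (F n (OrderDual.ofDual (f k))), fun k l h ↦ hFY _ _ _ (hf _ _ h)⟩
      exact monotone_stabilizes_iff_artinian.2 inferInstance g
  choose k hk using hstab
  have hall : ∀ l n, k₀ + ∑ i ∈ Finset.range n₀, k i ≤ l →
      F n (OrderDual.ofDual (f (k₀ + ∑ i ∈ Finset.range n₀, k i))) =
        F n (OrderDual.ofDual (f l)) := by
    intro l n hl
    rcases le_or_gt n₀ n with h | h
    · rw [hlarge n _ h (by lia), hlarge n _ h (by lia)]
    · have : k n ≤ ∑ i ∈ Finset.range n₀, k i :=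
        Finset.single_le_sum (fun _ _ ↦ Nat.zero_le _) (Finset.mem_range.2 h)
      rw [← hk n _ (by lia), ← hk n l (by lia)]
  refine ⟨k₀ + ∑ i ∈ Finset.range n₀, k i, fun l hl ↦ ?_⟩
  have h := hf _ _ hl
  have h' := le_antisymm (hle _ _ h fun n ↦ hall l n hl) h
  exact congrArg OrderDual.toDual h'

/-- A module on which each element of a finite set `s` acts locally nilpotently is Artinian if the
submodule annihilated by `s` is. -/
lemma isArtinian_of_torsionBySet_finset (s : Finset R) :
    ∀ {A : Type*} [AddCommGroup A] [Module R A]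
      (_ : ∀ x ∈ s, ∀ m : A, ∃ n : ℕ, x ^ n • m = 0)
      [IsArtinian R (Submodule.torsionBySet R A (s : Set R))], IsArtinian R A := by
  classical
  induction s using Finset.induction_on with
  | empty =>
    intro A _ _ _ h
    have : Function.Surjective (Submodule.torsionBySet R A ((∅ : Finset R) : Set R)).subtype :=
      fun m ↦ ⟨⟨m, by simp [Submodule.mem_torsionBySet_iff]⟩, rfl⟩
    exact isArtinian_of_surjective _ _ this
  | insert x s hx ih =>
    intro A _ _ hs h
    have : IsArtinian R (Submodule.torsionBySet R (Submodule.torsionBy R A x) (s : Set R)) := by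
      refine isArtinian_of_injective (P := Submodule.torsionBySet R A (insert x s : Finset R))
        (((Submodule.torsionBy R A x).subtype ∘ₗ Submodule.subtype _).codRestrict _ ?_) ?_
      · rintro m
        rw [Submodule.mem_torsionBySet_iff]
        rintro ⟨a, ha⟩
        rcases Finset.mem_insert.1 ha with rfl | ha
        · exact (Submodule.mem_torsionBy_iff _ _).1 m.1.2
        · exact congrArg Subtype.val ((Submodule.mem_torsionBySet_iff _ _).1 m.2 ⟨a, ha⟩)
      · intro a b hab
        have hab' := congrArg (Submodule.subtype _) hab
        exact Subtype.ext (Subtype.ext hab')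
    have : IsArtinian R (Submodule.torsionBy R A x) := ih fun y hy m ↦ by
      obtain ⟨n, hn⟩ := hs y (Finset.mem_insert_of_mem hy) m
      exact ⟨n, Subtype.ext hn⟩
    exact isArtinian_of_torsionBy x (hs x (Finset.mem_insert_self _ _))

lemma torsionBySet_span_finset (s : Finset R) :
    Submodule.torsionBySet R A (Ideal.span (s : Set R) : Set R) =
      Submodule.torsionBySet R A (s : Set R) :=
  (Submodule.torsionBySet_eq_torsionBySet_span _).symm

variable [IsNoetherianRing R]

lemma isArtinian_of_torsionBySet {R : Type u} [CommRing R] [IsNoetherianRing R] {A : Type u}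
    [AddCommGroup A] [Module R A] {𝔞 : Ideal R} (h𝔞 : IsTorsionIdeal 𝔞 A)
    (h : IsArtinian R (Submodule.torsionBySet R A (𝔞 : Set R))) : IsArtinian R A := by
  obtain ⟨s, rfl⟩ := IsNoetherian.noetherian 𝔞
  rw [torsionBySet_span_finset] at h
  refine isArtinian_of_torsionBySet_finset s fun x hx m ↦ ?_
  obtain ⟨n, hn⟩ := h𝔞 m
  exact ⟨n, hn _ (Ideal.pow_mem_pow (Ideal.subset_span hx) n)⟩

lemma finite_torsionBySet_mul {𝔞 𝔟 : Ideal R}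
    (h𝔞 : Module.Finite R (Submodule.torsionBySet R A (𝔞 : Set R)))
    (h𝔟 : Module.Finite R (Submodule.torsionBySet R A (𝔟 : Set R))) :
    Module.Finite R (Submodule.torsionBySet R A ((𝔞 * 𝔟 : Ideal R) : Set R)) := by
  obtain ⟨s, hs⟩ := IsNoetherian.noetherian 𝔞
  let f : Submodule.torsionBySet R A ((𝔞 * 𝔟 : Ideal R) : Set R) →ₗ[R]
      (s → Submodule.torsionBySet R A (𝔟 : Set R)) := LinearMap.pi fun x ↦
    ((LinearMap.lsmul R A x.1) ∘ₗ Submodule.subtype _).codRestrict _ fun m ↦ by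
      rw [Submodule.mem_torsionBySet_iff]
      rintro ⟨b, hb⟩
      show b • x.1 • (m : A) = 0
      rw [smul_smul, mul_comm]
      exact (Submodule.mem_torsionBySet_iff _ _).1 m.2
        ⟨_, Ideal.mul_mem_mul (hs ▸ Ideal.subset_span x.2) hb⟩
  have : IsNoetherian R (LinearMap.ker f) := by
    refine isNoetherian_of_injective (P := Submodule.torsionBySet R A (𝔞 : Set R))
      ((Submodule.subtype _ ∘ₗ Submodule.subtype _).codRestrict _ ?_) ?_
    · intro m
      have e : Submodule.torsionBySet R A (𝔞 : Set R) = Submodule.torsionBySet R A (s : Set R) := by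
        rw [← hs]
        exact torsionBySet_span_finset s
      rw [e, Submodule.mem_torsionBySet_iff]
      intro a
      exact congrArg Subtype.val (congrFun (LinearMap.mem_ker.1 m.2) a)
    · intro a b hab
      have hab' := congrArg (Submodule.subtype _) hab
      exact Subtype.ext (Subtype.ext hab')
  have := isNoetherian_of_range_eq_ker (LinearMap.ker f).subtype f (by simp)
  infer_instance

lemma finite_torsionBySet_pow {𝔞 : Ideal R}
    (h𝔞 : Module.Finite R (Submodule.torsionBySet R A (𝔞 : Set R))) (n : ℕ) :
    Module.Finite R (Submodule.torsionBySet R A ((𝔞 ^ n : Ideal R) : Set R)) := by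
  induction n with
  | zero =>
    have : Submodule.torsionBySet R A ((𝔞 ^ 0 : Ideal R) : Set R) = ⊥ := by
      rw [eq_bot_iff]
      intro m hm
      have := (Submodule.mem_torsionBySet_iff _ _).1 hm ⟨1, by simp⟩
      simpa using this
    rw [this]
    infer_instance
  | succ n ih => exact pow_succ 𝔞 n ▸ finite_torsionBySet_mul ih h𝔞

omit [IsNoetherianRing R] in
lemma surjective_or_nilpotent_of_supIrred [IsArtinian R A] {W : Submodule R A} (hW : SupIrred W)
    (r : R) : (∀ w ∈ W, ∃ w' ∈ W, r • w' = w) ∨ ∃ n : ℕ, ∀ w ∈ W, r ^ n • w = 0 := by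
  let f : Module.End R W := LinearMap.lsmul R W r
  have hfn : ∀ (n : ℕ) (w : W), (f ^ n) w = r ^ n • w := by
    intro n w
    induction n with
    | zero => simp
    | succ n ih =>
      rw [pow_succ', Module.End.mul_apply, ih, pow_succ', mul_smul]; rfl
  obtain ⟨N, hN⟩ := Filter.eventually_atTop.1 f.eventually_codisjoint_ker_pow_range_pow
  have h := (hN (N + 1) (by lia)).eq_top
  have h' : (LinearMap.ker (f ^ (N + 1))).map W.subtype ⊔
      (LinearMap.range (f ^ (N + 1))).map W.subtype = W := by
    rw [← Submodule.map_sup, h, Submodule.map_subtype_top]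
  rcases hW.2 h' with h | h
  · right
    refine ⟨N + 1, fun w hw ↦ ?_⟩
    rw [← h] at hw
    obtain ⟨w, hw, rfl⟩ := hw
    have := LinearMap.mem_ker.1 hw
    rw [hfn] at this
    exact congrArg Subtype.val this
  · left
    intro w hw
    rw [← h] at hw
    obtain ⟨_, ⟨w, rfl⟩, rfl⟩ := hw
    refine ⟨_, ((r ^ N) • w).2, ?_⟩
    rw [hfn, pow_succ', mul_smul]
    rfl

/-- Let `A` be an Artinian module whose submodules annihilated by powers of `𝔞` are finite. There
are finitely many primes not containing `𝔞` such that, modulo a fixed finite submodule, `A` is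
divisible by every element avoiding these primes. -/
lemma exists_finset_primes_divisible [IsArtinian R A] {𝔞 : Ideal R}
    (h : ∀ n : ℕ, Module.Finite R (Submodule.torsionBySet R A ((𝔞 ^ n : Ideal R) : Set R))) :
    ∃ (s : Finset (Ideal R)) (L : Submodule R A), (∀ q ∈ s, q.IsPrime ∧ ¬ 𝔞 ≤ q) ∧ L.FG ∧
      ∀ x : R, (∀ q ∈ s, x ∉ q) → ∀ m : A, ∃ l ∈ L, ∃ m', m = l + x • m' := by
  classical
  obtain ⟨t, ht, hirr⟩ := exists_supIrred_decomposition (⊤ : Submodule R A)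
  let q : Submodule R A → Ideal R := fun W ↦ W.annihilator.radical
  have hq : ∀ W r, r ∈ q W ↔ ∃ n : ℕ, ∀ w ∈ W, r ^ n • w = 0 := fun W r ↦ by
    simp only [q, Ideal.mem_radical_iff, Submodule.mem_annihilator]
  have hqp : ∀ W ∈ t, (q W).IsPrime := by
    intro W hW
    refine ⟨fun htop ↦ ?_, fun {x y} hxy ↦ ?_⟩
    · obtain ⟨n, hn⟩ := (hq W 1).1 (htop ▸ Submodule.mem_top)
      refine (hirr hW).1 (isMin_iff_eq_bot.2 (eq_bot_iff.2 fun w hw ↦ ?_))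
      simpa using hn w hw
    · rw [or_iff_not_imp_left]
      intro hx
      rcases surjective_or_nilpotent_of_supIrred (hirr hW) x with h1 | h1
      · rw [hq] at hxy ⊢
        obtain ⟨n, hn⟩ := hxy
        refine ⟨n, fun w hw ↦ ?_⟩
        have : ∀ k : ℕ, ∀ w ∈ W, ∃ w' ∈ W, x ^ k • w' = w := by
          intro k
          induction k with
          | zero => exact fun w hw ↦ ⟨w, hw, by simp⟩
          | succ k ih =>
            intro w hw
            obtain ⟨w', hw', rfl⟩ := h1 w hw
            obtain ⟨w'', hw'', rfl⟩ := ih w' hw'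
            exact ⟨w'', hw'', by rw [pow_succ', mul_smul]⟩
        obtain ⟨w', hw', rfl⟩ := this n w hw
        rw [smul_smul, ← mul_pow, mul_comm y x, hn w' hw']
      · exact absurd ((hq W x).2 h1) hx
  refine ⟨(t.filter fun W ↦ ¬ 𝔞 ≤ q W).image q, (t.filter fun W ↦ 𝔞 ≤ q W).sup id, ?_, ?_, ?_⟩
  · intro p hp
    obtain ⟨W, hW, rfl⟩ := Finset.mem_image.1 hp
    exact ⟨hqp W (Finset.mem_filter.1 hW).1, (Finset.mem_filter.1 hW).2⟩
  · refine Submodule.fg_finset_sup _ _ fun W hW ↦ ?_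
    obtain ⟨n, hn⟩ := Ideal.exists_pow_le_of_le_radical_of_fg (Finset.mem_filter.1 hW).2
      (IsNoetherian.noetherian 𝔞)
    have hle : W ≤ Submodule.torsionBySet R A ((𝔞 ^ n : Ideal R) : Set R) := fun w hw ↦ by
      rw [Submodule.mem_torsionBySet_iff]
      exact fun a ↦ Submodule.mem_annihilator.1 (hn a.2) w hw
    have := h n
    have : IsNoetherian R W := isNoetherian_of_le hle
    exact Module.Finite.iff_fg.1 (inferInstanceAs (Module.Finite R W))
  · intro x hx
    have key : (⊤ : Submodule R A) ≤ (t.filter fun W ↦ 𝔞 ≤ q W).sup id ⊔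
        LinearMap.range (LinearMap.lsmul R A x) := by
      rw [← ht]
      refine Finset.sup_le fun W hW ↦ ?_
      by_cases hW' : 𝔞 ≤ q W
      · exact (Finset.le_sup (f := id) (Finset.mem_filter.2 ⟨hW, hW'⟩)).trans le_sup_left
      · refine le_trans (fun w hw ↦ ?_) le_sup_right
        rcases surjective_or_nilpotent_of_supIrred (hirr hW) x with h1 | h1
        · obtain ⟨w', -, rfl⟩ := h1 w hw
          exact ⟨w', rfl⟩
        · exact absurd ((hq W x).2 h1)
            (hx _ (Finset.mem_image_of_mem _ (Finset.mem_filter.2 ⟨hW, hW'⟩)))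
    intro m
    obtain ⟨l, hl, _, ⟨m', rfl⟩, e⟩ := Submodule.mem_sup.1 (key (Submodule.mem_top (x := m)))
    exact ⟨l, hl, m', e.symm⟩

lemma isArtinian_of_isTorsionBySet {J : Ideal R} (hJ : ∀ p : Ideal R, p.IsPrime → J ≤ p → p.IsMaximal)
    [Module.Finite R A] (hA : Module.IsTorsionBySet R A (J : Set R)) : IsArtinian R A := by
  let _ := hA.module
  have : IsScalarTower R (R ⧸ J) A := hA.isScalarTower
  have : Module.Finite (R ⧸ J) A := Module.Finite.of_restrictScalars_finite R _ _
  have : Ring.KrullDimLE 0 (R ⧸ J) := Ring.KrullDimLE.mk₀ fun I hI ↦ by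
    have h1 : (I.comap (Ideal.Quotient.mk J)).IsMaximal := by
      refine hJ _ (Ideal.comap_isPrime _ _) fun x hx ↦ ?_
      rw [Ideal.mem_comap, Ideal.Quotient.eq_zero_iff_mem.2 hx]
      exact zero_mem _
    have := Ideal.map_comap_of_surjective _ Ideal.Quotient.mk_surjective I
    rcases Ideal.map_eq_top_or_isMaximal_of_surjective _ (Ideal.Quotient.mk_surjective (I := J)) h1
      with h | h
    · exact absurd (this.symm.trans h) hI.ne_top
    · exact this ▸ h
  have : IsArtinianRing (R ⧸ J) :=
    isArtinianRing_iff_isNoetherianRing_krullDimLE_zero.2 ⟨inferInstance, inferInstance⟩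
  have : IsArtinian (R ⧸ J) A := inferInstance
  exact isArtinian_of_surjective_algebraMap (R := R ⧸ J) (S := R) Ideal.Quotient.mk_surjective

end ModuleLemmas

section ExtFiniteness
open Abelian
variable (R : Type u) [CommRing R]

/-- `Ext^n_R(N, M)` is a finite `R`-module. -/
def FinExt (N M : Type u) [AddCommGroup N] [Module R N] [AddCommGroup M] [Module R M] (n : ℕ) :
    Prop :=
  Module.Finite R (Abelian.Ext (ModuleCat.of R N) (ModuleCat.of R M) n)

variable {R}

lemma finite_of_ker_le_range [IsNoetherianRing R] {A B C : Type*} [AddCommGroup A] [AddCommGroup B]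
    [AddCommGroup C] [Module R A] [Module R B] [Module R C] (f : A →ₗ[R] B) (g : B →ₗ[R] C)
    (h : LinearMap.ker g ≤ LinearMap.range f) (hA : Module.Finite R A) (hC : Module.Finite R C) :
    Module.Finite R B := by
  have : IsNoetherian R (LinearMap.range f) := inferInstance
  have : IsNoetherian R (LinearMap.ker g) := isNoetherian_of_le h
  have := isNoetherian_of_range_eq_ker (LinearMap.ker g).subtype g (by simp)
  infer_instance

variable {A B C : Type u} [AddCommGroup A] [AddCommGroup B] [AddCommGroup C]
  [Module R A] [Module R B] [Module R C] {f : A →ₗ[R] B} {g : B →ₗ[R] C}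

/-- The short complex associated with an exact pair of linear maps. -/
def shortComplexOfExact (h : Function.Exact f g) : ShortComplex (ModuleCat.{u} R) :=
  ShortComplex.mk (ModuleCat.ofHom f) (ModuleCat.ofHom g)
    (ModuleCat.hom_ext h.linearMap_comp_eq_zero)

lemma shortExact_shortComplexOfExact (h : Function.Exact f g) (hf : Function.Injective f)
    (hg : Function.Surjective g) : (shortComplexOfExact h).ShortExact :=
  ModuleCat.shortComplex_shortExact _ h hf hg

section
variable [IsNoetherianRing R]
  (h : Function.Exact f g) (hf : Function.Injective f) (hg : Function.Surjective g)
  {X : Type u} [AddCommGroup X] [Module R X] {n : ℕ}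
include h hf hg

lemma FinExt.middle (h1 : FinExt R X A n) (h3 : FinExt R X C n) : FinExt R X B n := by
  have hS := shortExact_shortComplexOfExact h hf hg
  refine finite_of_ker_le_range
    ((Ext.mk₀ (shortComplexOfExact h).f).postcompOfLinear R (.of R X) (add_zero n))
    ((Ext.mk₀ (shortComplexOfExact h).g).postcompOfLinear R (.of R X) (add_zero n)) ?_ h1 h3
  intro x hx
  exact Ext.covariant_sequence_exact₂ _ hS x hx

lemma FinExt.right (h2 : FinExt R X B n) (h1 : FinExt R X A (n + 1)) : FinExt R X C n := by
  have hS := shortExact_shortComplexOfExact h hf hg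
  refine finite_of_ker_le_range
    ((Ext.mk₀ (shortComplexOfExact h).g).postcompOfLinear R (.of R X) (add_zero n))
    (hS.extClass.postcompOfLinear R (.of R X) rfl) ?_ h2 h1
  intro x hx
  exact Ext.covariant_sequence_exact₃ _ hS x rfl hx

lemma FinExt.left (h3 : FinExt R X C n) (h2 : FinExt R X B (n + 1)) : FinExt R X A (n + 1) := by
  have hS := shortExact_shortComplexOfExact h hf hg
  refine finite_of_ker_le_range
    (hS.extClass.postcompOfLinear R (.of R X) rfl)
    ((Ext.mk₀ (shortComplexOfExact h).f).postcompOfLinear R (.of R X) (add_zero _)) ?_ h3 h2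
  intro x hx
  exact Ext.covariant_sequence_exact₁ _ hS x hx rfl

lemma FinExt.contra_middle (h1 : FinExt R A X n) (h3 : FinExt R C X n) : FinExt R B X n := by
  have hS := shortExact_shortComplexOfExact h hf hg
  refine finite_of_ker_le_range
    ((Ext.mk₀ (shortComplexOfExact h).g).precompOfLinear R (.of R X) (zero_add n))
    ((Ext.mk₀ (shortComplexOfExact h).f).precompOfLinear R (.of R X) (zero_add n)) ?_ h3 h1
  intro x hx
  exact Ext.contravariant_sequence_exact₂ hS _ x hx

lemma FinExt.contra_right (h1 : FinExt R A X n) (h2 : FinExt R B X (n + 1)) :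
    FinExt R C X (n + 1) := by
  have hS := shortExact_shortComplexOfExact h hf hg
  refine finite_of_ker_le_range
    (hS.extClass.precompOfLinear R (.of R X) (add_comm 1 n))
    ((Ext.mk₀ (shortComplexOfExact h).g).precompOfLinear R (.of R X) (zero_add _)) ?_ h1 h2
  intro x hx
  exact Ext.contravariant_sequence_exact₃ hS _ x hx (add_comm 1 n)

end

lemma postcompOfLinear_mk₀_injective {X Y Y' : ModuleCat.{u} R} (f : Y ⟶ Y') [Mono f] :
    Function.Injective ((Ext.mk₀ f).postcompOfLinear R X (add_zero 0)) := by
  refine (injective_iff_map_eq_zero _).2 fun x hx ↦ ?_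
  have hx' : x.comp (Ext.mk₀ f) (add_zero 0) = 0 := hx
  obtain ⟨x, rfl⟩ := (Ext.mk₀_bijective X Y).2 x
  rw [Ext.mk₀_comp_mk₀, Ext.mk₀_eq_zero_iff] at hx'
  rw [Ext.mk₀_eq_zero_iff, ← cancel_mono f, hx', Limits.zero_comp]

lemma precompOfLinear_mk₀_injective {X Y Y' : ModuleCat.{u} R} (f : Y ⟶ Y') [Epi f] :
    Function.Injective ((Ext.mk₀ f).precompOfLinear R X (zero_add 0)) := by
  refine (injective_iff_map_eq_zero _).2 fun x hx ↦ ?_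
  have hx' : (Ext.mk₀ f).comp x (zero_add 0) = 0 := hx
  obtain ⟨x, rfl⟩ := (Ext.mk₀_bijective Y' X).2 x
  rw [Ext.mk₀_comp_mk₀, Ext.mk₀_eq_zero_iff] at hx'
  rw [Ext.mk₀_eq_zero_iff, ← cancel_epi f, hx', Limits.comp_zero]

lemma FinExt.of_injective_zero [IsNoetherianRing R] {X : Type u} [AddCommGroup X] [Module R X]
    (hf : Function.Injective f) (h : FinExt R X B 0) : FinExt R X A 0 := by
  have : Mono (ModuleCat.ofHom f) := (ModuleCat.mono_iff_injective _).2 hf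
  have : IsNoetherian R (Abelian.Ext (ModuleCat.of R X) (ModuleCat.of R B) 0) := by
    have := h
    unfold FinExt at this
    infer_instance
  exact Module.Finite.of_injective
    ((Ext.mk₀ (ModuleCat.ofHom f)).postcompOfLinear R (.of R X) (add_zero 0))
    (postcompOfLinear_mk₀_injective _)

lemma FinExt.contra_zero_of_surjective [IsNoetherianRing R] {X : Type u} [AddCommGroup X]
    [Module R X] (hg : Function.Surjective g) (h : FinExt R B X 0) : FinExt R C X 0 := by
  have : Epi (ModuleCat.ofHom g) := (ModuleCat.epi_iff_surjective _).2 hg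
  have : IsNoetherian R (Abelian.Ext (ModuleCat.of R B) (ModuleCat.of R X) 0) := by
    have := h
    unfold FinExt at this
    infer_instance
  exact Module.Finite.of_injective
    ((Ext.mk₀ (ModuleCat.ofHom g)).precompOfLinear R (.of R X) (zero_add 0))
    (precompOfLinear_mk₀_injective _)

lemma FinExt.congr_right {X : Type u} [AddCommGroup X] [Module R X] {n : ℕ} (e : A ≃ₗ[R] B)
    (h : FinExt R X A n) : FinExt R X B n := by
  have := h
  unfold FinExt at this
  refine Module.Finite.of_surjective
    ((Ext.mk₀ (ModuleCat.ofHom e.toLinearMap)).postcompOfLinear R (.of R X) (add_zero n))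
    fun x ↦ ⟨x.comp (Ext.mk₀ (ModuleCat.ofHom e.symm.toLinearMap)) (add_zero n), ?_⟩
  have : ModuleCat.ofHom e.symm.toLinearMap ≫ ModuleCat.ofHom e.toLinearMap = 𝟙 _ := by
    ext; simp
  refine (Ext.comp_assoc_of_second_deg_zero _ _ _ (add_zero n)).trans ?_
  rw [Ext.mk₀_comp_mk₀, this, Ext.comp_mk₀_id]

lemma FinExt.congr_left {X : Type u} [AddCommGroup X] [Module R X] {n : ℕ} (e : A ≃ₗ[R] B)
    (h : FinExt R A X n) : FinExt R B X n := by
  have := h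
  unfold FinExt at this
  refine Module.Finite.of_surjective
    ((Ext.mk₀ (ModuleCat.ofHom e.symm.toLinearMap)).precompOfLinear R (.of R X) (zero_add n))
    fun x ↦ ⟨(Ext.mk₀ (ModuleCat.ofHom e.toLinearMap)).comp x (zero_add n), ?_⟩
  have : ModuleCat.ofHom e.symm.toLinearMap ≫ ModuleCat.ofHom e.toLinearMap = 𝟙 _ := by
    ext; simp
  refine (Ext.comp_assoc_of_second_deg_zero _ _ _ (zero_add n)).symm.trans ?_
  rw [Ext.mk₀_comp_mk₀, this, Ext.mk₀_id_comp]

lemma FinExt.of_finite [IsNoetherianRing R] [Module.Finite R A] [Module.Finite R B] (n : ℕ) :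
    FinExt R A B n :=
  ModuleCat.finite_ext R (.of R A) (.of R B) n

/-- Homomorphisms from `R ⧸ 𝔞` are elements annihilated by `𝔞`. -/
noncomputable def quotientHomEquivTorsionBySet (𝔞 : Ideal R) (M : Type u) [AddCommGroup M]
    [Module R M] : ((R ⧸ 𝔞) →ₗ[R] M) ≃ₗ[R] Submodule.torsionBySet R M (𝔞 : Set R) :=
  LinearEquiv.ofBijective
    ((LinearMap.applyₗ (Submodule.Quotient.mk 1 : R ⧸ 𝔞)).codRestrict _ fun φ ↦ by
      rw [Submodule.mem_torsionBySet_iff]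
      rintro ⟨a, ha⟩
      rw [LinearMap.applyₗ_apply_apply]
      show a • φ _ = 0
      rw [← map_smul, ← Submodule.Quotient.mk_smul, smul_eq_mul, mul_one,
        (Submodule.Quotient.mk_eq_zero 𝔞).2 ha, map_zero])
    ⟨fun φ ψ h ↦ by
      have h' : φ (Submodule.Quotient.mk 1) = ψ (Submodule.Quotient.mk 1) :=
        congrArg (Submodule.subtype _) h
      ext
      exact h', fun m ↦ by
      refine ⟨Submodule.liftQ 𝔞 (LinearMap.toSpanSingleton R M m) fun a ha ↦ ?_, ?_⟩
      · exact (Submodule.mem_torsionBySet_iff _ _).1 m.2 ⟨a, ha⟩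
      · exact Subtype.ext (one_smul R _)⟩

lemma finExt_zero_iff {𝔞 : Ideal R} :
    FinExt R (R ⧸ 𝔞) A 0 ↔ Module.Finite R (Submodule.torsionBySet R A (𝔞 : Set R)) :=
  Module.Finite.equiv_iff (Ext.linearEquiv₀ (R := R) ≪≫ₗ ModuleCat.homLinearEquiv (S := R) ≪≫ₗ
    quotientHomEquivTorsionBySet 𝔞 A)

lemma Ext.smul_eq_zero_of_mem_annihilator {r : R} (hr : r ∈ Module.annihilator R A) {n : ℕ}
    (α : Abelian.Ext (ModuleCat.of R A) (ModuleCat.of R B) n) : r • α = 0 := by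
  have h : r • 𝟙 (ModuleCat.of R A) = 0 := by
    ext m
    exact Module.mem_annihilator.1 hr m
  rw [← Ext.mk₀_id_comp α, ← Ext.smul_comp, ← Ext.mk₀_smul, h, Ext.mk₀_zero, Ext.zero_comp]

lemma FinExt.of_quotient_prime [IsNoetherianRing R] {𝔞 : Ideal R} {X : Type u} [AddCommGroup X]
    [Module R X] {i : ℕ} (hX : ∀ p : Ideal R, p.IsPrime → 𝔞 ≤ p → FinExt R (R ⧸ p) X i)
    (N : Type u) [AddCommGroup N] [Module R N] (hN : Module.Finite R N) (k : ℕ)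
    (hk : 𝔞 ^ k ≤ Module.annihilator R N) : FinExt R N X i := by
  refine IsNoetherianRing.induction_on_isQuotientEquivQuotientPrime R hN
    (motive := fun N _ _ _ ↦ 𝔞 ^ k ≤ Module.annihilator R N → FinExt R N X i) ?_ ?_ ?_ hk
  · intro N _ _ _ _ _
    refine ⟨⟨∅, eq_top_iff.2 fun α _ ↦ ?_⟩⟩
    have h1 : (1 : R) ∈ Module.annihilator R N :=
      Module.mem_annihilator.2 fun m ↦ Subsingleton.elim _ _
    rw [← one_smul R α, Ext.smul_eq_zero_of_mem_annihilator h1]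
    exact zero_mem _
  · intro N _ _ _ p e hN
    refine FinExt.congr_left e.symm (hX _ p.2 ?_)
    rw [e.annihilator_eq, Ideal.annihilator_quotient] at hN
    exact p.2.le_of_pow_le hN
  · intro N₁ _ _ _ N₂ _ _ _ N₃ _ _ _ f g hf hg hfg h1 h3 h
    exact FinExt.contra_middle hfg hf hg (h1 (h.trans (f.annihilator_le_of_injective hf)))
      (h3 (h.trans (g.annihilator_le_of_surjective hg)))

/-- If `Ext^i(R/𝔞, X)` is finite for `i ≤ n`, then so is `Ext^i(N, X)` for every finite module `N`
annihilated by a power of `𝔞`. -/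
lemma FinExt.of_pow_le_annihilator [IsNoetherianRing R] {𝔞 : Ideal R} {X : Type u}
    [AddCommGroup X] [Module R X] {n : ℕ} (hX : ∀ i ≤ n, FinExt R (R ⧸ 𝔞) X i) (N : Type u)
    [AddCommGroup N] [Module R N] [hN : Module.Finite R N] (k : ℕ)
    (hk : 𝔞 ^ k ≤ Module.annihilator R N) : ∀ i ≤ n, FinExt R N X i := by
  intro i
  induction i generalizing N k with
  | zero =>
    intro hi
    exact FinExt.of_quotient_prime (fun p _ hp ↦ FinExt.contra_zero_of_surjective
      (g := Submodule.factor hp) (Submodule.factor_surjective hp) (hX 0 hi)) N hN k hk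
  | succ i ih =>
    intro hi
    refine FinExt.of_quotient_prime (fun p _ hp ↦ ?_) N hN k hk
    let g := Submodule.factor hp
    have e : Function.Exact (LinearMap.ker g).subtype g := by
      rw [LinearMap.exact_iff]; simp
    refine FinExt.contra_right e (Submodule.injective_subtype _) (Submodule.factor_surjective hp)
      (ih _ 1 ?_ (by lia)) (hX _ hi)
    rw [pow_one]
    refine le_trans ?_ ((LinearMap.ker g).subtype.annihilator_le_of_injective
      (Submodule.injective_subtype _))
    rw [Ideal.annihilator_quotient]

lemma FinExt.of_le_radical [IsNoetherianRing R] {𝔞 𝔟 : Ideal R} {X : Type u}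
    [AddCommGroup X] [Module R X] {n : ℕ} (hX : ∀ i ≤ n, FinExt R (R ⧸ 𝔞) X i)
    (h : 𝔞 ≤ 𝔟.radical) : ∀ i ≤ n, FinExt R (R ⧸ 𝔟) X i := by
  obtain ⟨k, hk⟩ := Ideal.exists_pow_le_of_le_radical_of_fg h (IsNoetherian.noetherian 𝔞)
  exact FinExt.of_pow_le_annihilator hX _ k (by rwa [Ideal.annihilator_quotient])

lemma Ext.comp_mk₀_comp_mk₀_eq_zero {x : R} (hx : x ∈ Module.annihilator R A) {n : ℕ}
    {Y Z : ModuleCat.{u} R} (β : Abelian.Ext (ModuleCat.of R A) Y n) (g : Y ⟶ Z) (f : Z ⟶ Y)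
    (h : g ≫ f = x • 𝟙 Y) :
    (β.comp (Ext.mk₀ g) (add_zero n)).comp (Ext.mk₀ f) (add_zero n) = 0 := by
  rw [Ext.comp_assoc_of_second_deg_zero, Ext.mk₀_comp_mk₀, h, ← Ext.smul_eq_comp_mk₀]
  exact Ext.smul_eq_zero_of_mem_annihilator (B := Y) hx β

/-- Melkersson's criterion: finiteness of all `Ext^n(X, M)` can be checked on the kernel and
cokernel of an element annihilating `X`. -/
lemma FinExt.of_ker_of_coker [IsNoetherianRing R] {X : Type u} [AddCommGroup X] [Module R X]
    {x : R} (hx : x ∈ Module.annihilator R X)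
    (hK : ∀ n, FinExt R X (LinearMap.ker (LinearMap.lsmul R A x)) n)
    (hC : ∀ n, FinExt R X (A ⧸ LinearMap.range (LinearMap.lsmul R A x)) n) (n : ℕ) :
    FinExt R X A n := by
  let m := LinearMap.lsmul R A x
  have e1 : Function.Exact (LinearMap.ker m).subtype m.rangeRestrict := by
    rw [LinearMap.exact_iff]; simp
  have e2 : Function.Exact (LinearMap.range m).subtype (LinearMap.range m).mkQ := by
    rw [LinearMap.exact_iff]; simp
  have s1 := shortExact_shortComplexOfExact e1 (Submodule.injective_subtype _)
    m.surjective_rangeRestrict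
  have s2 := shortExact_shortComplexOfExact e2 (Submodule.injective_subtype _)
    (Submodule.mkQ_surjective _)
  have hcomp : (shortComplexOfExact e1).g ≫ (shortComplexOfExact e2).f = x • 𝟙 _ := rfl
  let φ := (Ext.mk₀ (shortComplexOfExact e2).f).postcompOfLinear R (.of R X) (add_zero n)
  have hφ : Module.Finite R (LinearMap.ker φ) := by
    rcases n with _ | n
    · have : LinearMap.ker φ = ⊥ := by
        have := s2.mono_f
        exact LinearMap.ker_eq_bot.2 (postcompOfLinear_mk₀_injective _)
      rw [this]
      infer_instance
    · have := hC n
      unfold FinExt at this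
      let ψ : Abelian.Ext (ModuleCat.of R X) (ModuleCat.of R (A ⧸ LinearMap.range m)) n →ₗ[R]
          Abelian.Ext (ModuleCat.of R X) (shortComplexOfExact e2).X₁ (n + 1) :=
        s2.extClass.postcompOfLinear R (.of R X) rfl
      have hle : LinearMap.ker φ ≤ LinearMap.range ψ := fun α hα ↦
        Ext.covariant_sequence_exact₁ _ s2 α hα rfl
      have : IsNoetherian R (LinearMap.range ψ) := inferInstance
      have := isNoetherian_of_le hle
      infer_instance
  have hI : FinExt R X (LinearMap.range m) n := by
    refine finite_of_ker_le_range (LinearMap.ker φ).subtype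
      (s1.extClass.postcompOfLinear R (.of R X) rfl) ?_ hφ (hK (n + 1))
    intro α hα
    suffices h : φ α = 0 from ⟨⟨α, h⟩, rfl⟩
    obtain ⟨β, rfl⟩ := Ext.covariant_sequence_exact₃ _ s1 α rfl hα
    exact Ext.comp_mk₀_comp_mk₀_eq_zero hx β _ _ hcomp
  exact FinExt.middle e1 (Submodule.injective_subtype _) m.surjective_rangeRestrict (hK n) hI

end ExtFiniteness

section Cofiniteness
variable {R : Type u} [CommRing R]

lemma exists_mem_notMem_of_isPrime {𝔞 c : Ideal R} (s : Finset (Ideal R))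
    (hs : ∀ q ∈ s, q.IsPrime ∧ ¬ 𝔞 ≤ q) (hc : ¬ 𝔞 ≤ c) :
    ∃ x ∈ 𝔞, x ∉ c ∧ ∀ q ∈ s, x ∉ q := by
  classical
  by_contra! h
  have h' : (𝔞 : Set R) ⊆ ⋃ i ∈ (↑(insert c s) : Set (Ideal R)), (i : Set R) := by
    intro x hx
    simp only [Finset.coe_insert, Set.mem_insert_iff, Finset.mem_coe, Set.mem_iUnion]
    by_cases hxc : x ∈ c
    · exact ⟨c, Or.inl rfl, hxc⟩
    · obtain ⟨q, hq, hxq⟩ := h x hx hxc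
      exact ⟨q, Or.inr hq, hxq⟩
  obtain ⟨q, hq, hle⟩ := (Ideal.subset_union_prime (f := id) c c (fun q hq hqc _ ↦
    (hs q ((Finset.mem_insert.1 hq).resolve_left hqc)).1)).1 h'
  obtain rfl | hq := Finset.mem_insert.1 hq
  · exact hc hle
  · exact (hs q hq).2 hle

variable [IsNoetherianRing R] {𝔞 : Ideal R}

omit [IsNoetherianRing R] in
lemma Module.Finite.of_finExt_zero {X : Type u} [AddCommGroup X] [Module R X]
    (h : 𝔞 ≤ Module.annihilator R X) (hX : FinExt R (R ⧸ 𝔞) X 0) : Module.Finite R X := by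
  have := finExt_zero_iff.1 hX
  refine Module.Finite.of_surjective (Submodule.subtype (Submodule.torsionBySet R X (𝔞 : Set R)))
    fun x ↦ ⟨⟨x, ?_⟩, rfl⟩
  rw [Submodule.mem_torsionBySet_iff]
  exact fun a ↦ Module.mem_annihilator.1 (h a.2) x

omit [IsNoetherianRing R] in
lemma sup_span_le_annihilator_ker {c : Ideal R} {X : Type u} [AddCommGroup X] [Module R X]
    (h : c ≤ Module.annihilator R X) (x : R) :
    c ⊔ Ideal.span {x} ≤ Module.annihilator R (LinearMap.ker (LinearMap.lsmul R X x)) := by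
  refine sup_le (h.trans (LinearMap.annihilator_le_of_injective _
    (Submodule.injective_subtype _))) ?_
  rw [Ideal.span_singleton_le_iff_mem, Module.mem_annihilator]
  exact fun m ↦ Subtype.ext m.2

omit [IsNoetherianRing R] in
lemma lt_sup_span_singleton {c : Ideal R} {x : R} (hx : x ∉ c) : c < c ⊔ Ideal.span {x} :=
  lt_of_le_of_ne le_sup_left fun h ↦ hx (h ▸ Ideal.mem_sup_right (Ideal.mem_span_singleton_self x))

/-- An artinian module with finite `Hom(R/𝔞, X)` has finite `Ext^n(R/𝔞, X)` for all `n`. -/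
lemma FinExt.of_isArtinian (X : Type u) [AddCommGroup X] [Module R X]
    [IsArtinian R X] (hX : FinExt R (R ⧸ 𝔞) X 0) (n : ℕ) : FinExt R (R ⧸ 𝔞) X n := by
  suffices h : ∀ c : Ideal R, ∀ (X : Type u) [AddCommGroup X] [Module R X] [IsArtinian R X],
      c ≤ Module.annihilator R X → FinExt R (R ⧸ 𝔞) X 0 → ∀ n, FinExt R (R ⧸ 𝔞) X n from
    h ⊥ X bot_le hX n
  intro c
  induction c using WellFoundedGT.induction with
  | ind c ih =>
  intro X _ _ _ hc hX
  by_cases hac : 𝔞 ≤ c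
  · have := Module.Finite.of_finExt_zero (hac.trans hc) hX
    exact fun n ↦ FinExt.of_finite n
  · obtain ⟨s, L, hs, hL, hdiv⟩ := exists_finset_primes_divisible (A := X)
      (finite_torsionBySet_pow (finExt_zero_iff.1 hX))
    obtain ⟨x, hxa, hxc, hxs⟩ := exists_mem_notMem_of_isPrime s hs hac
    refine FinExt.of_ker_of_coker (x := x) (by rwa [Ideal.annihilator_quotient]) ?_ ?_
    · exact ih _ (lt_sup_span_singleton hxc) _ (sup_span_le_annihilator_ker hc x)
        (FinExt.of_injective_zero (Submodule.injective_subtype _) hX)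
    · have : Module.Finite R (X ⧸ LinearMap.range (LinearMap.lsmul R X x)) := by
        have : Module.Finite R L := Module.Finite.iff_fg.2 hL
        refine Module.Finite.of_surjective ((Submodule.mkQ _).comp L.subtype) fun y ↦ ?_
        obtain ⟨m, rfl⟩ := Submodule.mkQ_surjective _ y
        obtain ⟨l, hl, m', rfl⟩ := hdiv x hxs m
        refine ⟨⟨l, hl⟩, ?_⟩
        suffices h : x • m' ∈ LinearMap.range (LinearMap.lsmul R X x) by
          simpa using (Submodule.Quotient.mk_eq_zero _).2 h
        exact ⟨m', rfl⟩
      exact fun n ↦ FinExt.of_finite n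

end Cofiniteness

section Cofiniteness
variable {R : Type u} [CommRing R] [IsNoetherianRing R] {𝔞 : Ideal R}

/-- If there are no chains of primes of length two over `𝔟`, then inverting the complement of the
minimal non-maximal primes over `𝔟` makes `R ⧸ 𝔟` zero-dimensional. -/
lemma exists_submonoid_of_not_chain {𝔟 : Ideal R}
    (H : ∀ p q r : Ideal R, p.IsPrime → q.IsPrime → r.IsPrime → 𝔟 ≤ p → p < q → ¬ q < r) :
    ∃ S : Submonoid R,
      (∀ s ∈ S, ∀ p : Ideal R, p.IsPrime → 𝔟 ≤ p → s ∈ p → p.IsMaximal) ∧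
      (∀ p q : Ideal R, p.IsPrime → 𝔟 ≤ p → p ≤ q → Disjoint (S : Set R) q → p = q) := by
  let T : Set (Ideal R) := {p | p ∈ 𝔟.minimalPrimes ∧ ¬ p.IsMaximal}
  have hT : T.Finite := (Ideal.finite_minimalPrimes_of_isNoetherianRing R 𝔟).subset fun _ h ↦ h.1
  have hTp : ∀ p ∈ T, p.IsPrime := fun p hp ↦ hp.1.1.1
  let S : Submonoid R :=
    { carrier := {s | ∀ p ∈ T, s ∉ p}
      one_mem' := fun p hp ↦ (Ideal.ne_top_iff_one p).1 (hTp p hp).ne_top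
      mul_mem' := fun {s t} hs ht p hp hst ↦
        ((hTp p hp).mem_or_mem hst).elim (hs p hp) (ht p hp) }
  refine ⟨S, fun s hs p hp hbp hsp ↦ ?_, fun p q hp hbp hpq hSq ↦ ?_⟩
  · obtain ⟨q, hq, hqp⟩ := Ideal.exists_minimalPrimes_le hbp
    by_cases hqm : q.IsMaximal
    · rwa [← hqm.eq_of_le hp.ne_top hqp]
    · obtain ⟨m, hm, hpm⟩ := Ideal.exists_le_maximal p hp.ne_top
      have hlt : q < p := lt_of_le_of_ne hqp fun h ↦ hs q ⟨hq, hqm⟩ (h ▸ hsp)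
      obtain rfl : p = m := by
        by_contra hne
        exact H q p m hq.1.1 hp hm.isPrime hq.1.2 hlt (lt_of_le_of_ne hpm hne)
      exact hm
  · have hsub : (q : Set R) ⊆ ⋃ p ∈ T, (id p : Ideal R) := by
      intro x hx
      have hxS : x ∉ S := fun h ↦ Set.disjoint_left.1 hSq h hx
      simp only [Set.mem_iUnion]
      by_contra! h
      exact hxS fun p hp ↦ h p hp
    obtain ⟨p', hp', hqp'⟩ := (Ideal.subset_union_prime_finite hT ⊥ ⊥
      (fun p hp _ _ ↦ hTp p hp)).1 hsub
    exact le_antisymm hpq (hqp'.trans (hp'.1.2 ⟨hp, hbp⟩ (hpq.trans hqp')))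

section Localization
variable (S : Submonoid R) {X : Type u} [AddCommGroup X] [Module R X]

omit [IsNoetherianRing R] in
lemma smul_eq_zero_of_mem_map {J : Ideal R} {a : LocalizedModule S X} (h : ∀ r ∈ J, r • a = 0)
    {r : Localization S} (hr : r ∈ J.map (algebraMap R (Localization S))) : r • a = 0 := by
  have : J.map (algebraMap R (Localization S)) ≤
      LinearMap.ker (LinearMap.toSpanSingleton (Localization S) _ a) := by
    rw [Ideal.map_le_iff_le_comap]
    intro r hr
    simpa using h r hr
  exact this hr

lemma exists_smul_eq_of_forall_smul_eq_zero {J : Ideal R} {a : LocalizedModule S X}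
    (h : ∀ r ∈ J, r • a = 0) : ∃ (s : S) (m : X), (∀ r ∈ J, r • m = 0) ∧
      s • a = LocalizedModule.mkLinearMap S X m := by
  obtain ⟨⟨m, s⟩, hms⟩ := IsLocalizedModule.surj S (LocalizedModule.mkLinearMap S X) a
  suffices h : ∃ t : S, ∀ r ∈ J, r • t • m = 0 by
    obtain ⟨t, ht⟩ := h
    refine ⟨t * s, t • m, ht, ?_⟩
    rw [mul_smul, hms, LinearMap.map_smul_of_tower]
  have key : ∀ r ∈ J, ∃ t : S, t • r • m = 0 := fun r hr ↦ by
    rw [← IsLocalizedModule.eq_zero_iff S (LocalizedModule.mkLinearMap S X), map_smul, ← hms,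
      smul_comm, h r hr, smul_zero]
  obtain ⟨F, rfl⟩ := IsNoetherian.noetherian J
  classical
  have : ∀ F' ⊆ F, ∃ t : S, ∀ r ∈ F', t • r • m = 0 := by
    intro F' hF'
    induction F' using Finset.induction with
    | empty => exact ⟨1, by simp⟩
    | insert r F' _ ih =>
      obtain ⟨t, ht⟩ := ih ((Finset.subset_insert _ _).trans hF')
      obtain ⟨t', ht'⟩ := key r (Submodule.subset_span (hF' (Finset.mem_insert_self _ _)))
      refine ⟨t * t', fun r' hr' ↦ ?_⟩
      obtain rfl | hr' := Finset.mem_insert.1 hr'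
      · rw [mul_smul, ht', smul_zero]
      · rw [mul_comm, mul_smul, ht r' hr', smul_zero]
  obtain ⟨t, ht⟩ := this F subset_rfl
  refine ⟨t, fun r hr ↦ ?_⟩
  suffices Ideal.span (F : Set R) ≤ LinearMap.ker (LinearMap.toSpanSingleton R X (t • m)) from
    this hr
  rw [Ideal.span_le]
  intro r hr
  show r • t • m = 0
  rw [smul_comm, ht r hr]

lemma finite_torsionBySet_localizedModule
    (h : Module.Finite R (Submodule.torsionBySet R X (𝔞 : Set R))) :
    Module.Finite (Localization S) (Submodule.torsionBySet (Localization S) (LocalizedModule S X)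
      (𝔞.map (algebraMap R (Localization S)) : Set (Localization S))) := by
  classical
  let f := LocalizedModule.mkLinearMap S X
  obtain ⟨F, hF⟩ := Module.Finite.iff_fg.1 h
  rw [Module.Finite.iff_fg]
  refine ⟨F.image f, le_antisymm ?_ ?_⟩
  · rw [Submodule.span_le]
    intro y hy
    obtain ⟨m, hm, rfl⟩ := Finset.mem_image.1 (Finset.mem_coe.1 hy)
    have hm' : m ∈ Submodule.torsionBySet R X (𝔞 : Set R) := hF ▸ Submodule.subset_span hm
    rw [Submodule.mem_torsionBySet_iff] at hm'
    rw [SetLike.mem_coe, Submodule.mem_torsionBySet_iff]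
    refine fun r ↦ smul_eq_zero_of_mem_map S (fun r hr ↦ ?_) r.2
    rw [← map_smul, hm' ⟨r, hr⟩, map_zero]
  · intro a ha
    rw [Submodule.mem_torsionBySet_iff] at ha
    obtain ⟨s, m, hm, hsa⟩ := exists_smul_eq_of_forall_smul_eq_zero S (J := 𝔞) (a := a)
      fun r hr ↦ by
        rw [← algebraMap_smul (Localization S)]
        exact ha ⟨_, Ideal.mem_map_of_mem _ hr⟩
    have hmem : m ∈ Submodule.span R (F : Set X) := by
      rw [hF, Submodule.mem_torsionBySet_iff]
      exact fun r ↦ hm r r.2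
    have hfm : f m ∈ Submodule.span (Localization S) (F.image f : Set (LocalizedModule S X)) := by
      rw [Finset.coe_image]
      exact Submodule.span_subset_span R _ _
        (Submodule.map_span f (F : Set X) ▸ Submodule.mem_map_of_mem hmem)
    have : a = (Localization.mk 1 s : Localization S) • f m := by
      rw [← hsa, Submonoid.smul_def, ← algebraMap_smul (Localization S) (s : R) a, smul_smul,
        ← Localization.mk_one_eq_algebraMap, Localization.mk_mul]
      simp [Localization.mk_self]
    rw [this]
    exact Submodule.smul_mem _ _ hfm

omit [IsNoetherianRing R] in
lemma IsTorsionIdeal.localizedModule (h : IsTorsionIdeal 𝔞 X) :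
    IsTorsionIdeal (𝔞.map (algebraMap R (Localization S))) (LocalizedModule S X) := by
  intro a
  induction a using LocalizedModule.induction_on with
  | h m s =>
  obtain ⟨n, hn⟩ := h m
  refine ⟨n, fun r hr ↦ ?_⟩
  rw [← Ideal.map_pow] at hr
  refine smul_eq_zero_of_mem_map S (fun r hr ↦ ?_) hr
  rw [LocalizedModule.smul'_mk, hn r hr, LocalizedModule.zero_mk]

omit [IsNoetherianRing R] in
lemma exists_smul_mem_of_mem_span (F : Finset (LocalizedModule S X)) :
    ∃ L : Submodule R X, L.FG ∧ ∀ l ∈ Submodule.span (Localization S) (F : Set _),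
      ∃ s : S, ∃ l₀ ∈ L, s • l = LocalizedModule.mkLinearMap S X l₀ := by
  classical
  choose g hg using IsLocalizedModule.surj S (LocalizedModule.mkLinearMap S X)
  refine ⟨Submodule.span R (F.image fun a ↦ (g a).1), ⟨_, rfl⟩, fun l hl ↦ ?_⟩
  induction hl using Submodule.span_induction with
  | mem a ha =>
    exact ⟨(g a).2, (g a).1, Submodule.subset_span (Finset.mem_coe.2
      (Finset.mem_image_of_mem _ ha)), hg a⟩
  | zero => exact ⟨1, 0, zero_mem _, by simp⟩
  | add l l' _ _ h h' =>
    obtain ⟨s, l₀, hl₀, hs⟩ := h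
    obtain ⟨s', l₀', hl₀', hs'⟩ := h'
    refine ⟨s' * s, s' • l₀ + s • l₀', add_mem (Submodule.smul_of_tower_mem _ _ hl₀)
      (Submodule.smul_of_tower_mem _ _ hl₀'), ?_⟩
    rw [smul_add, mul_smul, hs, mul_comm, mul_smul, hs', map_add, LinearMap.map_smul_of_tower,
      LinearMap.map_smul_of_tower]
  | smul r l _ h =>
    obtain ⟨s, l₀, hl₀, hs⟩ := h
    obtain ⟨⟨r', t⟩, hr⟩ := IsLocalization.surj S r
    refine ⟨t * s, r' • l₀, Submodule.smul_mem _ _ hl₀, ?_⟩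
    rw [map_smul, ← hs, mul_smul, smul_comm s, Submonoid.smul_def t,
      ← algebraMap_smul (Localization S) (t : R), smul_smul, mul_comm, hr, algebraMap_smul]

lemma isArtinian_localizedModule {c : Ideal R} (hX : IsTorsionIdeal 𝔞 X)
    (h : Module.Finite R (Submodule.torsionBySet R X (𝔞 : Set R)))
    (hc : c ≤ Module.annihilator R X)
    (hS : ∀ p q : Ideal R, p.IsPrime → 𝔞 ⊔ c ≤ p → p ≤ q → Disjoint (S : Set R) q → p = q) :
    IsArtinian (Localization S) (LocalizedModule S X) := by
  have : IsNoetherianRing (Localization S) := IsLocalization.isNoetherianRing S _ inferInstance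
  refine isArtinian_of_torsionBySet (hX.localizedModule S) ?_
  have := finite_torsionBySet_localizedModule S h
  refine isArtinian_of_isTorsionBySet (J := (𝔞 ⊔ c).map (algebraMap R (Localization S))) ?_ ?_
  · intro p hp hle
    obtain ⟨q, hq, hpq⟩ := Ideal.exists_le_maximal p hp.ne_top
    have hdisj := ((IsLocalization.isPrime_iff_isPrime_disjoint S _ q).1 hq.isPrime).2
    have heq := hS _ _ (Ideal.IsPrime.comap (algebraMap R (Localization S)))
      (Ideal.map_le_iff_le_comap.1 hle) (Ideal.comap_mono hpq) hdisj
    suffices h : p = q from h ▸ hq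
    exact (IsLocalization.map_under S (Localization S) p).symm.trans
      ((congrArg (Ideal.map _) heq).trans (IsLocalization.map_under S (Localization S) q))
  · intro a r
    apply Subtype.ext
    refine smul_eq_zero_of_mem_map S (J := 𝔞 ⊔ c) (fun r hr ↦ ?_) r.2
    obtain ⟨y, hy, z, hz, rfl⟩ := Submodule.mem_sup.1 hr
    have h1 : y • (a : LocalizedModule S X) = 0 := by
      rw [← algebraMap_smul (Localization S)]
      exact (Submodule.mem_torsionBySet_iff _ _).1 a.2 ⟨_, Ideal.mem_map_of_mem _ hy⟩
    have h2 : z • (a : LocalizedModule S X) = 0 := by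
      induction (a : LocalizedModule S X) using LocalizedModule.induction_on with
      | h m s => rw [LocalizedModule.smul'_mk, Module.mem_annihilator.1 (hc hz) m,
          LocalizedModule.zero_mk]
    rw [add_smul, h1, h2, add_zero]

lemma exists_forall_smul_mem_sup_range {c : Ideal R} (hX : IsTorsionIdeal 𝔞 X)
    (h : Module.Finite R (Submodule.torsionBySet R X (𝔞 : Set R)))
    (hc : c ≤ Module.annihilator R X) (hac : ¬ 𝔞 ≤ c)
    (hS : ∀ p q : Ideal R, p.IsPrime → 𝔞 ⊔ c ≤ p → p ≤ q → Disjoint (S : Set R) q → p = q) :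
    ∃ x ∈ 𝔞, x ∉ c ∧ ∃ L : Submodule R X, L.FG ∧
      ∀ m, ∃ s ∈ S, s • m ∈ L ⊔ LinearMap.range (LinearMap.lsmul R X x) := by
  classical
  have : IsNoetherianRing (Localization S) := IsLocalization.isNoetherianRing S _ inferInstance
  have := isArtinian_localizedModule S hX h hc hS
  obtain ⟨T, L', hT, ⟨F, rfl⟩, hdiv⟩ := exists_finset_primes_divisible
    (A := LocalizedModule S X) (finite_torsionBySet_pow (finite_torsionBySet_localizedModule S h))
  obtain ⟨x, hxa, hxc, hxT⟩ := exists_mem_notMem_of_isPrime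
    (T.image (Ideal.comap (algebraMap R (Localization S)))) (fun q hq ↦ by
      obtain ⟨p, hp, rfl⟩ := Finset.mem_image.1 hq
      have := (hT p hp).1
      exact ⟨inferInstance, fun hle ↦ (hT p hp).2 (Ideal.map_le_iff_le_comap.2 hle)⟩) hac
  obtain ⟨L, hL, hLF⟩ := exists_smul_mem_of_mem_span S F
  refine ⟨x, hxa, hxc, L, hL, fun m ↦ ?_⟩
  let f := LocalizedModule.mkLinearMap S X
  obtain ⟨l, hl, m', hm⟩ := hdiv (algebraMap R _ x)
    (fun q hq hxq ↦ hxT _ (Finset.mem_image_of_mem _ hq) hxq) (f m)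
  rw [algebraMap_smul] at hm
  obtain ⟨s, l₀, hl₀, hs⟩ := hLF l hl
  obtain ⟨⟨m₀, t⟩, hm₀⟩ := IsLocalizedModule.surj S f m'
  have h0 : f ((t * s) • m - (t • l₀ + x • s • m₀)) = 0 := by
    have h1 : (t * s) • f m = t • s • l + x • s • t • m' := by
      rw [hm, smul_add, mul_smul, mul_smul]
      congr 1
      simp only [Submonoid.smul_def, smul_smul]
      congr 1
      ring
    have hm₀' : t • m' = f m₀ := hm₀
    rw [map_sub, map_add, LinearMap.map_smul_of_tower, LinearMap.map_smul_of_tower, map_smul,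
      LinearMap.map_smul_of_tower, h1, hs, hm₀', sub_self]
  obtain ⟨u, hu⟩ := (IsLocalizedModule.eq_zero_iff S f).1 h0
  refine ⟨u * (t * s), mul_mem u.2 (mul_mem t.2 s.2), ?_⟩
  have : ((u : R) * (t * s)) • m = (u * t : R) • l₀ + x • (u * s : R) • m₀ := by
    simp only [Submonoid.smul_def, smul_sub, smul_add, smul_smul, Submonoid.coe_mul] at hu ⊢
    rw [sub_eq_zero.1 hu]
    congr 2
    ring
  rw [this]
  exact add_mem (Submodule.mem_sup_left (Submodule.smul_mem _ _ hl₀))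
    (Submodule.mem_sup_right ⟨_, rfl⟩)

end Localization

end Cofiniteness

section Cofiniteness
variable {R : Type u} [CommRing R] {𝔞 : Ideal R} {X Y : Type u}
  [AddCommGroup X] [Module R X] [AddCommGroup Y] [Module R Y]

lemma IsTorsionIdeal.of_injective (h : IsTorsionIdeal 𝔞 Y) (f : X →ₗ[R] Y)
    (hf : Function.Injective f) : IsTorsionIdeal 𝔞 X := fun m ↦ by
  obtain ⟨n, hn⟩ := h (f m)
  exact ⟨n, fun a ha ↦ hf (by rw [map_smul, hn a ha, map_zero])⟩

lemma IsTorsionIdeal.of_surjective (h : IsTorsionIdeal 𝔞 X) (f : X →ₗ[R] Y)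
    (hf : Function.Surjective f) : IsTorsionIdeal 𝔞 Y := fun m ↦ by
  obtain ⟨m, rfl⟩ := hf m
  obtain ⟨n, hn⟩ := h m
  exact ⟨n, fun a ha ↦ by rw [← map_smul, hn a ha, map_zero]⟩

lemma exists_mem_forall_smul_eq_zero {S : Submonoid R} [Module.Finite R X]
    (h : ∀ m : X, ∃ s ∈ S, s • m = 0) : ∃ s ∈ S, ∀ m : X, s • m = 0 := by
  classical
  obtain ⟨F, hF⟩ := Module.Finite.fg_top (R := R) (M := X)
  suffices h : ∃ s ∈ S, ∀ m ∈ F, s • m = 0 by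
    obtain ⟨s, hs, hsF⟩ := h
    refine ⟨s, hs, fun m ↦ ?_⟩
    have : Submodule.span R (F : Set X) ≤ LinearMap.ker (LinearMap.lsmul R X s) :=
      Submodule.span_le.2 hsF
    exact this (hF ▸ Submodule.mem_top)
  clear hF
  induction F using Finset.induction with
  | empty => exact ⟨1, one_mem _, by simp⟩
  | insert m F _ ih =>
    obtain ⟨s, hs, hsF⟩ := ih
    obtain ⟨t, ht, htm⟩ := h m
    refine ⟨s * t, mul_mem hs ht, fun m' hm' ↦ ?_⟩
    obtain rfl | hm' := Finset.mem_insert.1 hm'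
    · rw [mul_smul, htm, smul_zero]
    · rw [mul_comm, mul_smul, hsF m' hm', smul_zero]

lemma le_annihilator_torsionBySet {J : Ideal R} :
    J ≤ Module.annihilator R (Submodule.torsionBySet R X (J : Set R)) := fun r hr ↦
  Module.mem_annihilator.2 fun m ↦
    Subtype.ext ((Submodule.mem_torsionBySet_iff _ _).1 m.2 ⟨r, hr⟩)

variable [IsNoetherianRing R]

lemma isArtinian_of_forall_exists_smul_eq_zero {c : Ideal R} {S : Submonoid R}
    (hS : ∀ s ∈ S, ∀ p : Ideal R, p.IsPrime → 𝔞 ⊔ c ≤ p → s ∈ p → p.IsMaximal)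
    (hX : IsTorsionIdeal 𝔞 X) (hc : c ≤ Module.annihilator R X) (h0 : FinExt R (R ⧸ 𝔞) X 0)
    (h : ∀ m : X, ∃ s ∈ S, s • m = 0) : IsArtinian R X := by
  have := finExt_zero_iff.1 h0
  refine isArtinian_of_torsionBySet hX ?_
  obtain ⟨s, hs, hsm⟩ := exists_mem_forall_smul_eq_zero (S := S)
    (X := Submodule.torsionBySet R X (𝔞 : Set R)) fun m ↦ by
      obtain ⟨s, hs, hsm⟩ := h m
      exact ⟨s, hs, Subtype.ext hsm⟩
  refine isArtinian_of_isTorsionBySet (J := 𝔞 ⊔ c ⊔ Ideal.span {s}) (fun p hp hle ↦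
    hS s hs p hp (le_sup_left.trans hle)
      (hle (Ideal.mem_sup_right (Ideal.mem_span_singleton_self s)))) ?_
  have hle : 𝔞 ⊔ c ⊔ Ideal.span {s} ≤
      Module.annihilator R (Submodule.torsionBySet R X (𝔞 : Set R)) := by
    refine sup_le (sup_le le_annihilator_torsionBySet (hc.trans
      (LinearMap.annihilator_le_of_injective _ (Submodule.injective_subtype _)))) ?_
    rw [Ideal.span_singleton_le_iff_mem]
    exact Module.mem_annihilator.2 hsm
  exact fun m r ↦ Module.mem_annihilator.1 (hle r.2) m

/-- Let `X` be an `𝔞`-torsion module annihilated by `c` such that there are no chains of primes of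
length two over `𝔞 ⊔ c`. If `Ext^n(R/𝔞, X)` is finite for `n = 0, 1`, then it is finite for all
`n`. -/
lemma FinExt.of_not_chain (c : Ideal R) (hX : IsTorsionIdeal 𝔞 X)
    (hc : c ≤ Module.annihilator R X)
    (H : ∀ p q r : Ideal R, p.IsPrime → q.IsPrime → r.IsPrime → 𝔞 ⊔ c ≤ p → p < q → ¬ q < r)
    (h0 : FinExt R (R ⧸ 𝔞) X 0) (h1 : FinExt R (R ⧸ 𝔞) X 1) (n : ℕ) : FinExt R (R ⧸ 𝔞) X n := by
  revert n
  induction c using WellFoundedGT.induction generalizing X with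
  | ind c ih =>
  by_cases hac : 𝔞 ≤ c
  · have := Module.Finite.of_finExt_zero (hac.trans hc) h0
    exact fun n ↦ FinExt.of_finite n
  obtain ⟨S, hS, hS'⟩ := exists_submonoid_of_not_chain H
  obtain ⟨x, hxa, hxc, L, hL, hdiv⟩ := exists_forall_smul_mem_sup_range S hX
    (finExt_zero_iff.1 h0) hc hac hS'
  have : Module.Finite R L := Module.Finite.iff_fg.2 hL
  have eL : Function.Exact L.subtype L.mkQ := by rw [LinearMap.exact_iff]; simp
  have iL := Submodule.injective_subtype L
  have sL := Submodule.mkQ_surjective L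
  have h0N : FinExt R (R ⧸ 𝔞) (X ⧸ L) 0 := FinExt.right eL iL sL h0 (FinExt.of_finite 1)
  have h1N : FinExt R (R ⧸ 𝔞) (X ⧸ L) 1 := FinExt.right eL iL sL h1 (FinExt.of_finite 2)
  have hN : IsTorsionIdeal 𝔞 (X ⧸ L) := hX.of_surjective _ sL
  have hcN : c ≤ Module.annihilator R (X ⧸ L) :=
    hc.trans (LinearMap.annihilator_le_of_surjective _ sL)
  let m := LinearMap.lsmul R (X ⧸ L) x
  have e1 : Function.Exact (LinearMap.ker m).subtype m.rangeRestrict := by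
    rw [LinearMap.exact_iff]; simp
  have e2 : Function.Exact (LinearMap.range m).subtype (LinearMap.range m).mkQ := by
    rw [LinearMap.exact_iff]; simp
  have i1 := Submodule.injective_subtype (LinearMap.ker m)
  have s1 := m.surjective_rangeRestrict
  have i2 := Submodule.injective_subtype (LinearMap.range m)
  have s2 := Submodule.mkQ_surjective (LinearMap.range m)
  have hK : ∀ n, FinExt R (R ⧸ 𝔞) (LinearMap.ker m) n :=
    ih _ (lt_sup_span_singleton hxc) (hN.of_injective _ i1) (sup_span_le_annihilator_ker hcN x)
      (fun p q r hp hq hr hle ↦ H p q r hp hq hr ((sup_le_sup_left le_sup_left _).trans hle))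
      (FinExt.of_injective_zero i1 h0N)
      (FinExt.left e1 i1 s1 (FinExt.of_injective_zero i2 h0N) h1N)
  have h0C : FinExt R (R ⧸ 𝔞) ((X ⧸ L) ⧸ LinearMap.range m) 0 :=
    FinExt.right e2 i2 s2 h0N (FinExt.right e1 i1 s1 h1N (hK 2))
  have hC : IsArtinian R ((X ⧸ L) ⧸ LinearMap.range m) := by
    refine isArtinian_of_forall_exists_smul_eq_zero hS (hN.of_surjective _ s2)
      (hcN.trans (LinearMap.annihilator_le_of_surjective _ s2)) h0C fun y ↦ ?_
    obtain ⟨y, rfl⟩ := s2 y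
    obtain ⟨y, rfl⟩ := sL y
    obtain ⟨s, hs, hsy⟩ := hdiv y
    refine ⟨s, hs, ?_⟩
    obtain ⟨l, hl, z, ⟨w, rfl⟩, hlz⟩ := Submodule.mem_sup.1 hsy
    have hl0 : L.mkQ l = 0 := (Submodule.Quotient.mk_eq_zero L).2 hl
    rw [← map_smul, ← map_smul, ← hlz, map_add, hl0, zero_add]
    exact (Submodule.Quotient.mk_eq_zero _).2 ⟨L.mkQ w, rfl⟩
  have hNn : ∀ n, FinExt R (R ⧸ 𝔞) (X ⧸ L) n :=
    FinExt.of_ker_of_coker (x := x) (by rwa [Ideal.annihilator_quotient]) hK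
      (FinExt.of_isArtinian _ h0C)
  exact fun n ↦ FinExt.middle eL iL sL (FinExt.of_finite n) (hNn n)

end Cofiniteness

section Cofiniteness
variable {R : Type u} [CommRing R] (𝔞 : Ideal R) (X : Type u) [AddCommGroup X] [Module R X]

/-- The submodule of elements annihilated by some power of `𝔞`. -/
def gammaSubmodule : Submodule R X where
  carrier := {m | ∃ n : ℕ, ∀ a ∈ 𝔞 ^ n, a • m = 0}
  zero_mem' := ⟨0, fun _ _ ↦ smul_zero _⟩
  add_mem' := by
    rintro m m' ⟨n, hn⟩ ⟨n', hn'⟩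
    refine ⟨n + n', fun a ha ↦ ?_⟩
    rw [smul_add, hn a (Ideal.pow_le_pow_right (Nat.le_add_right _ _) ha),
      hn' a (Ideal.pow_le_pow_right (Nat.le_add_left _ _) ha), add_zero]
  smul_mem' := by
    rintro r m ⟨n, hn⟩
    exact ⟨n, fun a ha ↦ by rw [smul_comm, hn a ha, smul_zero]⟩

lemma isTorsionIdeal_gammaSubmodule : IsTorsionIdeal 𝔞 (gammaSubmodule 𝔞 X) := fun m ↦ by
  obtain ⟨n, hn⟩ := m.2
  exact ⟨n, fun a ha ↦ Subtype.ext (hn a ha)⟩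

variable {𝔞 X}

lemma IsTorsionIdeal.exists_pow_le_annihilator [Module.Finite R X] (h : IsTorsionIdeal 𝔞 X) :
    ∃ n : ℕ, 𝔞 ^ n ≤ Module.annihilator R X := by
  classical
  obtain ⟨F, hF⟩ := Module.Finite.fg_top (R := R) (M := X)
  choose n hn using h
  refine ⟨F.sup n, fun a ha ↦ Module.mem_annihilator.2 fun m ↦ ?_⟩
  have : Submodule.span R (F : Set X) ≤ LinearMap.ker (LinearMap.lsmul R X a) :=
    Submodule.span_le.2 fun m hm ↦ hn m a (Ideal.pow_le_pow_right (Finset.le_sup hm) ha)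
  exact this (hF ▸ Submodule.mem_top)

variable [IsNoetherianRing R]

lemma exists_notMem_forall_mem_pow_mul_eq_zero {p : Ideal R} (hp : p ∈ minimalPrimes R)
    (h : 𝔞 ≤ p) : ∃ s ∉ p, ∃ n : ℕ, ∀ a ∈ 𝔞 ^ n, s * a = 0 := by
  have := hp.1.1
  have hle : 𝔞 ≤ (RingHom.ker (algebraMap R (Localization.AtPrime p))).radical := fun a ha ↦ by
    have : IsNilpotent (algebraMap R (Localization.AtPrime p) a) := by
      refine nilpotent_iff_mem_prime.2 fun q hq ↦ ?_
      have hqp : q.comap (algebraMap R (Localization.AtPrime p)) ≤ p := fun x hx ↦ by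
        by_contra hxp
        exact hq.ne_top (Ideal.eq_top_of_isUnit_mem _ hx
          (IsLocalization.map_units _ (⟨x, hxp⟩ : p.primeCompl)))
      exact hp.2 ⟨hq.comap _, bot_le⟩ hqp (h ha)
    obtain ⟨n, hn⟩ := this
    exact ⟨n, by rw [RingHom.mem_ker, map_pow, hn]⟩
  obtain ⟨n, hn⟩ := Ideal.exists_pow_le_of_le_radical_of_fg hle (IsNoetherian.noetherian 𝔞)
  obtain ⟨s, hs, hsn⟩ := exists_mem_forall_smul_eq_zero (S := p.primeCompl)
    (X := (𝔞 ^ n : Ideal R)) fun a ↦ by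
      obtain ⟨s, hs⟩ := (IsLocalization.map_eq_zero_iff p.primeCompl
        (Localization.AtPrime p) (a : R)).1 (hn a.2)
      exact ⟨s, s.2, Subtype.ext hs⟩
  exact ⟨s, hs, n, fun a ha ↦ congrArg (Submodule.subtype _) (hsn ⟨a, ha⟩)⟩

omit [IsNoetherianRing R] in
lemma not_chain_of_ringKrullDim_quotient_le_one (h : ringKrullDim (R ⧸ 𝔞) ≤ 1)
    (p q r : Ideal R) (hp : p.IsPrime) (hq : q.IsPrime) (hr : r.IsPrime) (hle : 𝔞 ≤ p)
    (hpq : p < q) : ¬ q < r := by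
  intro hqr
  rw [ringKrullDim_quotient, Order.krullDim_le_one_iff] at h
  obtain h | h := h ⟨⟨q, hq⟩, hle.trans hpq.le⟩
  · exact hpq.not_ge (h (b := ⟨⟨p, hp⟩, hle⟩) hpq.le)
  · exact hqr.not_ge (h (b := ⟨⟨r, hr⟩, hle.trans (hpq.le.trans hqr.le)⟩) hqr.le)

lemma not_chain_of_ringKrullDim_le_two (h : ringKrullDim R ≤ 2)
    (p q r : Ideal R) (hp : p.IsPrime) (hq : q.IsPrime) (hr : r.IsPrime)
    (hle : 𝔞 ⊔ gammaSubmodule 𝔞 R ≤ p) (hpq : p < q) : ¬ q < r := by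
  intro hqr
  have hmin : p ∈ minimalPrimes R := by
    refine ⟨⟨hp, bot_le⟩, fun p' hp' hle' ↦ ?_⟩
    by_contra hne
    have hlt : p' < p := lt_of_le_not_ge hle' hne
    let s : LTSeries (PrimeSpectrum R) := LTSeries.mk 3 ![⟨p', hp'.1⟩, ⟨p, hp⟩, ⟨q, hq⟩, ⟨r, hr⟩] (by
      refine Fin.strictMono_iff_lt_succ.2 fun i ↦ ?_
      fin_cases i
      exacts [hlt, hpq, hqr])
    have h3 : ((3 : ℕ) : WithBot ℕ∞) ≤ (2 : ℕ) := (Order.LTSeries.length_le_krullDim s).trans h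
    exact absurd (Nat.cast_le.1 h3) (by decide)
  obtain ⟨s, hs, n, hn⟩ := exists_notMem_forall_mem_pow_mul_eq_zero hmin (le_sup_left.trans hle)
  exact hs (hle (Ideal.mem_sup_right ⟨n, fun a ha ↦ by rw [smul_eq_mul, mul_comm, hn a ha]⟩))

lemma FinExt.of_ringKrullDim_le_two (h : ringKrullDim R ≤ 2) (hX : IsTorsionIdeal 𝔞 X)
    (h0 : FinExt R (R ⧸ 𝔞) X 0) (h1 : FinExt R (R ⧸ 𝔞) X 1) (n : ℕ) : FinExt R (R ⧸ 𝔞) X n := by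
  obtain ⟨k, hk⟩ := (isTorsionIdeal_gammaSubmodule 𝔞 R).exists_pow_le_annihilator
  let L : Submodule R X := (gammaSubmodule 𝔞 R : Ideal R) • ⊤
  have hL : L ≤ Submodule.torsionBySet R X ((𝔞 ^ k : Ideal R) : Set R) := by
    refine Submodule.smul_le.2 fun r hr m _ ↦ ?_
    rw [Submodule.mem_torsionBySet_iff]
    intro a
    rw [← smul_assoc, show (a : R) • r = 0 from
      congrArg (Submodule.subtype _) (Module.mem_annihilator.1 (hk a.2) ⟨r, hr⟩), zero_smul]
  have := finite_torsionBySet_pow (finExt_zero_iff.1 h0) k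
  have : IsNoetherian R L := isNoetherian_of_le hL
  have eL : Function.Exact L.subtype L.mkQ := by rw [LinearMap.exact_iff]; simp
  have iL := Submodule.injective_subtype L
  have sL := Submodule.mkQ_surjective L
  refine FinExt.middle eL iL sL (FinExt.of_finite n)
    (FinExt.of_not_chain (gammaSubmodule 𝔞 R) (hX.of_surjective _ sL) (fun r hr ↦ ?_)
      (not_chain_of_ringKrullDim_le_two h) (FinExt.right eL iL sL h0 (FinExt.of_finite 1))
      (FinExt.right eL iL sL h1 (FinExt.of_finite 2)) n)
  refine Module.mem_annihilator.2 fun m ↦ ?_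
  obtain ⟨m, rfl⟩ := sL m
  rw [← map_smul]
  exact (Submodule.Quotient.mk_eq_zero _).2 (Submodule.smul_mem_smul hr Submodule.mem_top)

lemma FinExt.of_span_singleton {x : R} (h0 : FinExt R (R ⧸ Ideal.span {x}) X 0)
    (h1 : FinExt R (R ⧸ Ideal.span {x}) X 1) (n : ℕ) : FinExt R (R ⧸ Ideal.span {x}) X n := by
  let m := LinearMap.lsmul R X x
  have e1 : Function.Exact (LinearMap.ker m).subtype m.rangeRestrict := by
    rw [LinearMap.exact_iff]; simp
  have e2 : Function.Exact (LinearMap.range m).subtype (LinearMap.range m).mkQ := by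
    rw [LinearMap.exact_iff]; simp
  have i1 := Submodule.injective_subtype (LinearMap.ker m)
  have s1 := m.surjective_rangeRestrict
  have i2 := Submodule.injective_subtype (LinearMap.range m)
  have s2 := Submodule.mkQ_surjective (LinearMap.range m)
  have : Module.Finite R (LinearMap.ker m) := Module.Finite.of_finExt_zero
    (le_sup_right.trans (sup_span_le_annihilator_ker (c := ⊥) bot_le x))
    (FinExt.of_injective_zero i1 h0)
  have h0C := FinExt.right e2 i2 s2 h0 (FinExt.right e1 i1 s1 h1 (FinExt.of_finite 2))
  have : Module.Finite R (X ⧸ LinearMap.range m) := by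
    refine Module.Finite.of_finExt_zero ?_ h0C
    rw [Ideal.span_singleton_le_iff_mem]
    refine Module.mem_annihilator.2 fun y ↦ ?_
    obtain ⟨y, rfl⟩ := s2 y
    rw [← map_smul]
    exact (Submodule.Quotient.mk_eq_zero _).2 ⟨y, rfl⟩
  refine FinExt.of_ker_of_coker (x := x) ?_ (fun n ↦ FinExt.of_finite n)
    (fun n ↦ FinExt.of_finite n) n
  rw [Ideal.annihilator_quotient]
  exact Ideal.mem_span_singleton_self x

lemma exists_radical_span_singleton_eq (h : arithRank 𝔞 ≤ 1) :
    ∃ x : R, (Ideal.span {x}).radical = 𝔞.radical := by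
  have hne : {n : ℕ | ∃ f : Fin n → R, (Ideal.span (Set.range f)).radical = 𝔞.radical}.Nonempty := by
    obtain ⟨n, f, hf⟩ := Submodule.fg_iff_exists_fin_generating_family.1
      (IsNoetherian.noetherian 𝔞)
    exact ⟨n, f, congrArg _ hf⟩
  obtain ⟨f, hf⟩ : ∃ f : Fin (arithRank 𝔞) → R,
      (Ideal.span (Set.range f)).radical = 𝔞.radical := Nat.sInf_mem hne
  generalize arithRank 𝔞 = n at h f hf
  interval_cases n
  · refine ⟨0, ?_⟩
    rw [← hf, Set.range_eq_empty, Ideal.span_empty, Ideal.span_singleton_zero]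
  · exact ⟨f 0, by rw [← hf, Set.range_unique]; rfl⟩

/-- The key finiteness criterion: in each of the three cases, finiteness of `Ext^n(R/𝔞, X)` for an
`𝔞`-torsion module `X` can be checked for `n = 0, 1`. -/
lemma FinExt.of_isTorsionIdeal
    (h : ringKrullDim (R ⧸ 𝔞) ≤ 1 ∨ ringKrullDim R ≤ 2 ∨ arithRank 𝔞 ≤ 1)
    (hX : IsTorsionIdeal 𝔞 X) (h0 : FinExt R (R ⧸ 𝔞) X 0) (h1 : FinExt R (R ⧸ 𝔞) X 1) (n : ℕ) :
    FinExt R (R ⧸ 𝔞) X n := by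
  obtain h | h | h := h
  · exact FinExt.of_not_chain ⊥ hX bot_le
      (by simpa using not_chain_of_ringKrullDim_quotient_le_one h) h0 h1 n
  · exact FinExt.of_ringKrullDim_le_two h hX h0 h1 n
  · obtain ⟨x, hx⟩ := exists_radical_span_singleton_eq h
    have hle : ∀ i ≤ 1, FinExt R (R ⧸ 𝔞) X i := fun i hi ↦ by
      interval_cases i
      exacts [h0, h1]
    have hx' := FinExt.of_le_radical (𝔟 := Ideal.span {x}) hle (hx ▸ Ideal.le_radical)
    exact FinExt.of_le_radical (fun i _ ↦ FinExt.of_span_singleton (hx' 0 zero_le_one)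
      (hx' 1 le_rfl) i) (hx ▸ Ideal.le_radical) n le_rfl

end Cofiniteness

section Gamma
variable {R : Type u} [CommRing R] {𝔞 : Ideal R} {X Y : Type u} [AddCommGroup X] [Module R X]
  [AddCommGroup Y] [Module R Y]

lemma comap_gammaSubmodule_of_injective {f : X →ₗ[R] Y} (hf : Function.Injective f) :
    (gammaSubmodule 𝔞 Y).comap f = gammaSubmodule 𝔞 X := by
  ext m
  refine exists_congr fun n ↦ forall₂_congr fun a _ ↦ ?_
  rw [← map_smul, map_eq_zero_iff f hf]

lemma map_mem_gammaSubmodule (f : X →ₗ[R] Y) {m : X} (hm : m ∈ gammaSubmodule 𝔞 X) :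
    f m ∈ gammaSubmodule 𝔞 Y := by
  obtain ⟨n, hn⟩ := hm
  exact ⟨n, fun a ha ↦ by rw [← map_smul, hn a ha, map_zero]⟩

variable [IsNoetherianRing R]

lemma gammaSubmodule_quotient_eq_bot : gammaSubmodule 𝔞 (X ⧸ gammaSubmodule 𝔞 X) = ⊥ := by
  rw [eq_bot_iff]
  rintro m ⟨n, hn⟩
  obtain ⟨m, rfl⟩ := Submodule.mkQ_surjective _ m
  let f : (𝔞 ^ n : Ideal R) →ₗ[R] X := (LinearMap.toSpanSingleton R X m).comp
    (Submodule.subtype _)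
  have hf : IsTorsionIdeal 𝔞 (LinearMap.range f) := by
    rintro ⟨_, ⟨a, ha⟩, rfl⟩
    have h := hn a ha
    rw [← map_smul] at h
    obtain ⟨k, hk⟩ := (Submodule.Quotient.mk_eq_zero _).1 h
    exact ⟨k, fun b hb ↦ Subtype.ext (hk b hb)⟩
  obtain ⟨k, hk⟩ := hf.exists_pow_le_annihilator
  refine (Submodule.mem_bot R).2 ((Submodule.Quotient.mk_eq_zero _).2 ⟨k + n, fun a ha ↦ ?_⟩)
  rw [pow_add] at ha
  induction ha using Submodule.mul_induction_on' with
  | mem_mul_mem a ha b hb =>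
    rw [mul_smul]
    exact congrArg (Submodule.subtype _) (Module.mem_annihilator.1 (hk ha) ⟨_, ⟨b, hb⟩, rfl⟩)
  | add a _ b _ ha hb => rw [add_smul, ha, hb, add_zero]

lemma baer_gammaSubmodule (hX : Module.Injective R X) : Module.Baer R (gammaSubmodule 𝔞 X) := by
  intro J f
  have hf : IsTorsionIdeal 𝔞 (LinearMap.range f) :=
    (isTorsionIdeal_gammaSubmodule 𝔞 X).of_injective _ (Submodule.injective_subtype _)
  obtain ⟨n, hn⟩ := hf.exists_pow_le_annihilator
  obtain ⟨k, hk⟩ := Ideal.exists_pow_inf_eq_pow_smul 𝔞 (J : Submodule R R)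
  have hle : 𝔞 ^ (n + k) ⊓ J ≤ 𝔞 ^ n * J := by
    have h := hk (n + k) (Nat.le_add_left _ _)
    rw [Nat.add_sub_cancel, smul_eq_mul, smul_eq_mul, smul_eq_mul, Ideal.mul_top] at h
    rw [h]
    exact Ideal.mul_mono_right inf_le_right
  let K : Submodule R J := Submodule.comap (Submodule.subtype J) (𝔞 ^ (n + k) : Ideal R)
  have hK : K ≤ LinearMap.ker f := by
    rintro ⟨a, haJ⟩ ha
    have hker : 𝔞 ^ n * J ≤ (LinearMap.ker f).map J.subtype := by
      rw [Ideal.mul_le]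
      intro b hb c hc
      refine ⟨b • ⟨c, hc⟩, ?_, rfl⟩
      show f _ = 0
      rw [map_smul]
      exact congrArg (Submodule.subtype _) (Module.mem_annihilator.1 (hn hb) ⟨_, ⟨c, hc⟩, rfl⟩)
    obtain ⟨b, hb, hba⟩ := hker (hle ⟨ha, haJ⟩)
    rwa [← show b = ⟨a, haJ⟩ from Subtype.ext hba]
  let j : (J ⧸ K) →ₗ[R] R ⧸ (𝔞 ^ (n + k) : Ideal R) := Submodule.mapQ _ _ J.subtype le_rfl
  have hj : Function.Injective j := by
    rw [← LinearMap.ker_eq_bot, Submodule.ker_mapQ, Submodule.mkQ_map_self]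
  obtain ⟨g, hg⟩ := hX.out j hj ((Submodule.subtype _).comp (K.liftQ f hK))
  refine ⟨(g.comp (Submodule.mkQ _)).codRestrict _ fun r ↦ ⟨n + k, fun a ha ↦ ?_⟩, fun r hr ↦ ?_⟩
  · rw [LinearMap.comp_apply, ← map_smul, ← map_smul,
      show Submodule.mkQ (𝔞 ^ (n + k) : Ideal R) (a • r) = 0 from
        (Submodule.Quotient.mk_eq_zero _).2 (Ideal.mul_mem_right _ _ ha), map_zero]
  · exact Subtype.ext (hg (K.mkQ ⟨r, hr⟩))

lemma injective_gammaSubmodule [hX : Injective (ModuleCat.of R X)] :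
    Injective (ModuleCat.of R (gammaSubmodule 𝔞 X)) := by
  have hX' : Module.Injective R X := Module.injective_module_of_injective_object R X
  have := (baer_gammaSubmodule (𝔞 := 𝔞) hX').injective
  exact Module.injective_object_of_injective_module R _

omit [IsNoetherianRing R] in
variable (𝔞 X) in
lemma exact_gammaSubmodule :
    Function.Exact (gammaSubmodule 𝔞 X).subtype (gammaSubmodule 𝔞 X).mkQ := by
  rw [LinearMap.exact_iff]; simp

open Abelian

omit [IsNoetherianRing R] in
lemma subsingleton_ext_zero_of_gammaSubmodule_eq_bot {𝔟 : Ideal R} {k : ℕ} (hk : 𝔞 ^ k ≤ 𝔟)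
    (h : gammaSubmodule 𝔞 X = ⊥) :
    Subsingleton (Abelian.Ext (ModuleCat.of R (R ⧸ 𝔟)) (ModuleCat.of R X) 0) := by
  refine ((Ext.linearEquiv₀ (R := R) ≪≫ₗ ModuleCat.homLinearEquiv (S := R) ≪≫ₗ
    quotientHomEquivTorsionBySet 𝔟 X).toEquiv).subsingleton_congr.2 ?_
  rw [Submodule.subsingleton_iff_eq_bot, eq_bot_iff, ← h]
  intro m hm
  rw [Submodule.mem_torsionBySet_iff] at hm
  exact ⟨k, fun a ha ↦ hm ⟨a, hk ha⟩⟩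

/-- If `I` is injective then `Ext^n(R/𝔟, I/Γ(I)) = 0` for all `n` and all `𝔟` containing a power
of `𝔞`. -/
lemma subsingleton_ext_quotient_gammaSubmodule [Injective (ModuleCat.of R X)] {𝔟 : Ideal R} {k : ℕ}
    (hk : 𝔞 ^ k ≤ 𝔟) (n : ℕ) : Subsingleton (Abelian.Ext (ModuleCat.of R (R ⧸ 𝔟))
      (ModuleCat.of R (X ⧸ gammaSubmodule 𝔞 X)) n) := by
  cases n with
  | zero => exact subsingleton_ext_zero_of_gammaSubmodule_eq_bot hk gammaSubmodule_quotient_eq_bot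
  | succ n =>
    have hS := shortExact_shortComplexOfExact (exact_gammaSubmodule 𝔞 X)
      (Submodule.injective_subtype _) (Submodule.mkQ_surjective _)
    have : Injective (shortComplexOfExact (exact_gammaSubmodule 𝔞 X)).X₁ :=
      injective_gammaSubmodule
    have : Injective (shortComplexOfExact (exact_gammaSubmodule 𝔞 X)).X₂ :=
      inferInstanceAs (Injective (ModuleCat.of R X))
    refine subsingleton_of_forall_eq 0 fun z ↦ ?_
    obtain ⟨w, hw⟩ := Ext.covariant_sequence_exact₃ _ hS z rfl (Ext.eq_zero_of_injective _)
    rw [← hw, Ext.eq_zero_of_injective w]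
    exact Ext.zero_comp _ (n + 1) (Ext.mk₀ (shortComplexOfExact (exact_gammaSubmodule 𝔞 X)).g) _
      (add_zero _)

omit [IsNoetherianRing R] in
lemma FinExt.of_subsingleton {A B : Type u} [AddCommGroup A] [Module R A] [AddCommGroup B]
    [Module R B] {n : ℕ} (h : Subsingleton (Abelian.Ext (ModuleCat.of R A) (ModuleCat.of R B) n)) :
    FinExt R A B n := by
  unfold FinExt
  infer_instance

end Gamma

section LocalCohomologyData
open Abelian
variable {R : Type u} [CommRing R] (𝔞 : Ideal R)

/-- The projection `R/𝔞^s → R/𝔞^t` for `t ≤ s`. -/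
def powTrans {t s : ℕ} (h : t ≤ s) : ModuleCat.of R (R ⧸ 𝔞 ^ s) ⟶ ModuleCat.of R (R ⧸ 𝔞 ^ t) :=
  ModuleCat.ofHom (Submodule.factor (Ideal.pow_le_pow_right h))

/-- The transition map `Ext^i(R/𝔞^t, M) → Ext^i(R/𝔞^s, M)` for `t ≤ s`. -/
noncomputable def powPull {t s : ℕ} (h : t ≤ s) (M : ModuleCat.{u} R) (i : ℕ) :
    Abelian.Ext (ModuleCat.of R (R ⧸ 𝔞 ^ t)) M i →ₗ[R]
      Abelian.Ext (ModuleCat.of R (R ⧸ 𝔞 ^ s)) M i :=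
  (Ext.mk₀ (powTrans 𝔞 h)).precompOfLinear R M (zero_add i)

variable {𝔞}

lemma powPull_apply {t s : ℕ} (h : t ≤ s) {M : ModuleCat.{u} R} {i : ℕ}
    (z : Abelian.Ext (ModuleCat.of R (R ⧸ 𝔞 ^ t)) M i) :
    powPull 𝔞 h M i z = (Ext.mk₀ (powTrans 𝔞 h)).comp z (zero_add i) := rfl

lemma powTrans_comp {t s r : ℕ} (h : t ≤ s) (h' : s ≤ r) :
    powTrans 𝔞 h' ≫ powTrans 𝔞 h = powTrans 𝔞 (h.trans h') := by
  ext
  rfl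

lemma powPull_powPull {t s r : ℕ} (h : t ≤ s) (h' : s ≤ r) {M : ModuleCat.{u} R} {i : ℕ}
    (z : Abelian.Ext (ModuleCat.of R (R ⧸ 𝔞 ^ t)) M i) :
    powPull 𝔞 h' M i (powPull 𝔞 h M i z) = powPull 𝔞 (h.trans h') M i z := by
  simp only [powPull_apply]
  rw [Ext.mk₀_comp_mk₀_assoc, powTrans_comp]

lemma powPull_comp {t s : ℕ} (h : t ≤ s) {M N : ModuleCat.{u} R} {i j k : ℕ}
    (z : Abelian.Ext (ModuleCat.of R (R ⧸ 𝔞 ^ t)) M i) (w : Abelian.Ext M N j) (hk : i + j = k) :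
    powPull 𝔞 h N k (z.comp w hk) = (powPull 𝔞 h M i z).comp w hk :=
  (Ext.comp_assoc _ _ _ (zero_add i) _ (by lia)).symm

variable (𝔞) in
/-- The maps `ι t` exhibit `H` as the colimit of the modules `Ext^i(R/𝔞^t, M)`. -/
structure IsColimitExt (i : ℕ) (M : ModuleCat.{u} R) (H : Type u) [AddCommGroup H] [Module R H]
    (ι : ∀ t : ℕ, Abelian.Ext (ModuleCat.of R (R ⧸ 𝔞 ^ t)) M i →ₗ[R] H) : Prop where
  map_powPull : ∀ {t s : ℕ} (h : t ≤ s) (z), ι s (powPull 𝔞 h M i z) = ι t z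
  exists_eq : ∀ y : H, ∃ t z, ι t z = y
  exists_powPull_eq_zero : ∀ {t : ℕ} (z), ι t z = 0 → ∃ s, ∃ h : t ≤ s, powPull 𝔞 h M i z = 0

variable {i : ℕ} {H : Type u} [AddCommGroup H] [Module R H] {S : ShortComplex (ModuleCat.{u} R)}

lemma IsColimitExt.of_shortExact_left (hS : S.ShortExact)
    (h0 : ∀ t : ℕ, Subsingleton (Abelian.Ext (ModuleCat.of R (R ⧸ 𝔞 ^ t)) S.X₂ i))
    (h1 : ∀ t : ℕ, Subsingleton (Abelian.Ext (ModuleCat.of R (R ⧸ 𝔞 ^ t)) S.X₂ (i + 1)))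
    {ι : ∀ t : ℕ, Abelian.Ext (ModuleCat.of R (R ⧸ 𝔞 ^ t)) S.X₃ i →ₗ[R] H}
    (hι : IsColimitExt 𝔞 i S.X₃ H ι) : ∃ ι', IsColimitExt 𝔞 (i + 1) S.X₁ H ι' := by
  let d (t : ℕ) := hS.extClass.postcompOfLinear R (ModuleCat.of R (R ⧸ 𝔞 ^ t)) (rfl : i + 1 = _)
  have hd_apply (t z) : d t z = z.comp hS.extClass rfl := rfl
  have hd (t : ℕ) : Function.Bijective (d t) := by
    refine ⟨(injective_iff_map_eq_zero _).2 fun z hz ↦ ?_, fun z ↦ ?_⟩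
    · obtain ⟨w, rfl⟩ := Ext.covariant_sequence_exact₃ _ hS z rfl hz
      rw [(h0 t).elim w 0, Ext.zero_comp]
    · exact Ext.covariant_sequence_exact₁ _ hS z ((h1 t).elim _ _) rfl
  let e (t : ℕ) := LinearEquiv.ofBijective (d t) (hd t)
  have he (t z) : e t z = z.comp hS.extClass rfl := rfl
  have hpull {t s : ℕ} (h : t ≤ s) (z) :
      (e s).symm (powPull 𝔞 h _ _ z) = powPull 𝔞 h _ _ ((e t).symm z) := by
    rw [LinearEquiv.symm_apply_eq, he, ← powPull_comp, ← he, LinearEquiv.apply_symm_apply]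
  refine ⟨fun t ↦ ι t ∘ₗ (e t).symm.toLinearMap, fun {t s} h z ↦ ?_, fun y ↦ ?_, fun {t} z hz ↦ ?_⟩
  · exact (congrArg (ι s) (hpull h z)).trans (hι.map_powPull h _)
  · obtain ⟨t, z, rfl⟩ := hι.exists_eq y
    exact ⟨t, e t z, congrArg (ι t) ((e t).symm_apply_apply z)⟩
  · obtain ⟨s, h, hs⟩ := hι.exists_powPull_eq_zero _ hz
    refine ⟨s, h, ?_⟩
    exact (LinearEquiv.map_eq_zero_iff (e s).symm).1 ((hpull h z).trans hs)

variable (𝔞) in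
/-- Every element of `Ext^j(R/𝔞^t, M)` vanishes in `Ext^j(R/𝔞^s, M)` for `s` large enough. -/
def ExtVanishes (M : ModuleCat.{u} R) (j : ℕ) : Prop :=
  ∀ (t : ℕ) (z : Abelian.Ext (ModuleCat.of R (R ⧸ 𝔞 ^ t)) M j),
    ∃ s, ∃ h : t ≤ s, powPull 𝔞 h M j z = 0

lemma IsColimitExt.of_shortExact_middle (hS : S.ShortExact)
    (h0 : ExtVanishes 𝔞 S.X₁ i) (h1 : ExtVanishes 𝔞 S.X₁ (i + 1))
    {ι : ∀ t : ℕ, Abelian.Ext (ModuleCat.of R (R ⧸ 𝔞 ^ t)) S.X₃ i →ₗ[R] H}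
    (hι : IsColimitExt 𝔞 i S.X₃ H ι) : ∃ ι', IsColimitExt 𝔞 i S.X₂ H ι' := by
  let g (t : ℕ) := (Ext.mk₀ S.g).postcompOfLinear R (ModuleCat.of R (R ⧸ 𝔞 ^ t)) (add_zero i)
  have hpull {t s : ℕ} (h : t ≤ s) (z) : g s (powPull 𝔞 h _ _ z) = powPull 𝔞 h _ _ (g t z) :=
    (powPull_comp h z _ (add_zero i)).symm
  refine ⟨fun t ↦ ι t ∘ₗ g t, fun {t s} h z ↦ ?_, fun y ↦ ?_, fun {t} z hz ↦ ?_⟩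
  · exact (congrArg (ι s) (hpull h z)).trans (hι.map_powPull h _)
  · obtain ⟨t, z, rfl⟩ := hι.exists_eq y
    obtain ⟨s, h, hs⟩ := h1 t (z.comp hS.extClass rfl)
    rw [powPull_comp] at hs
    obtain ⟨w, hw⟩ := Ext.covariant_sequence_exact₃ _ hS _ rfl hs
    exact ⟨s, w, (congrArg (ι s) hw).trans (hι.map_powPull h _)⟩
  · obtain ⟨s, h, hs⟩ := hι.exists_powPull_eq_zero _ hz
    obtain ⟨w, hw⟩ := Ext.covariant_sequence_exact₂ _ hS (powPull 𝔞 h _ _ z) ((hpull h z).trans hs)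
    obtain ⟨r, h', hr⟩ := h0 s w
    refine ⟨r, h.trans h', ?_⟩
    rw [← powPull_powPull h h', ← hw, powPull_comp, hr, Ext.zero_comp]

end LocalCohomologyData

section Vanishing
open Abelian
variable {R : Type u} [CommRing R] {𝔞 : Ideal R} {S : ShortComplex (ModuleCat.{u} R)}

lemma ExtVanishes.succ_of_shortExact (hS : S.ShortExact) [Injective S.X₂] {j : ℕ}
    (h : ExtVanishes 𝔞 S.X₃ j) : ExtVanishes 𝔞 S.X₁ (j + 1) := by
  intro t z
  obtain ⟨w, rfl⟩ := Ext.covariant_sequence_exact₁ _ hS z (Ext.eq_zero_of_injective _) rfl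
  obtain ⟨s, hs, hw⟩ := h t w
  exact ⟨s, hs, by rw [powPull_comp, hw, Ext.zero_comp]⟩

lemma ExtVanishes.one_of_shortExact (hS : S.ShortExact) [Injective S.X₂]
    (h : IsTorsionIdeal 𝔞 S.X₂) : ExtVanishes 𝔞 S.X₁ 1 := by
  intro t z
  obtain ⟨w, rfl⟩ := Ext.covariant_sequence_exact₁ _ hS z (Ext.eq_zero_of_injective _)
    (zero_add 1)
  obtain ⟨f, rfl⟩ := (Ext.mk₀_bijective _ _).2 w
  have := hS.epi_g
  obtain ⟨y, hy⟩ := (ModuleCat.epi_iff_surjective S.g).1 this (f.hom (Submodule.Quotient.mk 1))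
  obtain ⟨n, hn⟩ := h y
  let l : ModuleCat.of R (R ⧸ 𝔞 ^ max t n) ⟶ S.X₂ := ModuleCat.ofHom
    (Submodule.liftQ _ (LinearMap.toSpanSingleton R S.X₂ y)
      fun a ha ↦ hn a (Ideal.pow_le_pow_right (le_max_right t n) ha))
  have hl : powTrans 𝔞 (le_max_left t n) ≫ f = l ≫ S.g := by
    refine ModuleCat.hom_ext (Submodule.linearMap_qext _ (LinearMap.ext_ring ?_))
    refine Eq.trans ?_ (hy.symm.trans (congrArg S.g.hom (one_smul R y).symm))
    rfl
  refine ⟨max t n, le_max_left t n, ?_⟩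
  rw [powPull_comp, powPull_apply, Ext.mk₀_comp_mk₀, hl, ← Ext.mk₀_comp_mk₀,
    Ext.comp_assoc _ _ _ (zero_add 0) (zero_add 1) (by lia), hS.comp_extClass, Ext.comp_zero]

lemma exists_injective_linearMap (X : Type u) [AddCommGroup X] [Module R X] :
    ∃ (I : ModuleCat.{u} R) (f : X →ₗ[R] I), Injective I ∧ Function.Injective f :=
  ⟨Injective.under (ModuleCat.of R X), (Injective.ι (ModuleCat.of R X)).hom, inferInstance,
    (ModuleCat.mono_iff_injective _).1 inferInstance⟩

variable [IsNoetherianRing R]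

lemma IsTorsionIdeal.exists_shortExact {X : Type u} [AddCommGroup X] [Module R X]
    (hX : IsTorsionIdeal 𝔞 X) : ∃ (J : Type u) (_ : AddCommGroup J) (_ : Module R J)
      (f : X →ₗ[R] J) (e : Function.Exact f (LinearMap.range f).mkQ),
      (shortComplexOfExact e).ShortExact ∧ Injective (shortComplexOfExact e).X₂ ∧
        IsTorsionIdeal 𝔞 J := by
  obtain ⟨I, f, hI, hf⟩ := exists_injective_linearMap (R := R) X
  let g : X →ₗ[R] gammaSubmodule 𝔞 I := f.codRestrict _ fun m ↦ map_mem_gammaSubmodule f (hX m)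
  have hg : Function.Injective g := fun a b h ↦ hf (congrArg (Submodule.subtype _) h)
  have e : Function.Exact g (LinearMap.range g).mkQ := by rw [LinearMap.exact_iff]; simp
  exact ⟨_, _, _, g, e, shortExact_shortComplexOfExact e hg (Submodule.mkQ_surjective _),
    injective_gammaSubmodule, isTorsionIdeal_gammaSubmodule 𝔞 I⟩

lemma IsTorsionIdeal.extVanishes {X : Type u} [AddCommGroup X] [Module R X]
    (hX : IsTorsionIdeal 𝔞 X) (j : ℕ) : ExtVanishes 𝔞 (ModuleCat.of R X) (j + 1) := by
  induction j generalizing X with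
  | zero =>
    obtain ⟨J, _, _, f, e, hS, hJ, hJt⟩ := hX.exists_shortExact
    exact ExtVanishes.one_of_shortExact hS hJt
  | succ j ih =>
    obtain ⟨J, _, _, f, e, hS, hJ, hJt⟩ := hX.exists_shortExact
    exact ExtVanishes.succ_of_shortExact hS (ih (hJt.of_surjective _ (Submodule.mkQ_surjective _)))

end Vanishing

section Main
open Abelian
variable {R : Type u} [CommRing R] {𝔞 : Ideal R}

lemma exists_isColimitExt_zero (M : Type u) [AddCommGroup M] [Module R M] :
    ∃ ι, IsColimitExt 𝔞 0 (ModuleCat.of R M) (gammaSubmodule 𝔞 M) ι := by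
  let e (t : ℕ) : Abelian.Ext (ModuleCat.of R (R ⧸ 𝔞 ^ t)) (ModuleCat.of R M) 0 ≃ₗ[R]
      ((R ⧸ 𝔞 ^ t) →ₗ[R] M) := Ext.linearEquiv₀ (R := R) ≪≫ₗ ModuleCat.homLinearEquiv (S := R)
  have he (t) (f : (R ⧸ 𝔞 ^ t) →ₗ[R] M) : (e t).symm f = Ext.mk₀ (ModuleCat.ofHom f) := rfl
  let ev (t : ℕ) : ((R ⧸ 𝔞 ^ t) →ₗ[R] M) →ₗ[R] gammaSubmodule 𝔞 M :=
    (LinearMap.applyₗ (Submodule.Quotient.mk 1)).codRestrict _ fun f ↦ ⟨t, fun a ha ↦ by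
      have : a • (Submodule.Quotient.mk 1 : R ⧸ 𝔞 ^ t) = 0 :=
        (Submodule.Quotient.mk_eq_zero _).2 (by simpa using ha)
      rw [LinearMap.applyₗ_apply_apply, ← map_smul, this, map_zero]⟩
  have hev (t f) : ((ev t f : gammaSubmodule 𝔞 M) : M) = f (Submodule.Quotient.mk 1) := rfl
  have hpull {t s : ℕ} (h : t ≤ s) (z) : e s (powPull 𝔞 h _ 0 z) =
      (e t z).comp (Submodule.factor (Ideal.pow_le_pow_right h)) := by
    obtain ⟨f, rfl⟩ := (e t).symm.surjective z
    rw [LinearEquiv.apply_symm_apply, ← LinearEquiv.eq_symm_apply, he, he, powPull_apply,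
      Ext.mk₀_comp_mk₀]
    rfl
  refine ⟨fun t ↦ ev t ∘ₗ (e t).toLinearMap, fun {t s} h z ↦ ?_, fun y ↦ ?_, fun {t} z hz ↦ ?_⟩
  · refine (congrArg (ev s) (hpull h z)).trans (Subtype.ext ?_)
    rfl
  · obtain ⟨y, t, hy⟩ := y
    let f : (R ⧸ 𝔞 ^ t) →ₗ[R] M := Submodule.liftQ _ (LinearMap.toSpanSingleton R M y) hy
    refine ⟨t, (e t).symm f, (congrArg (ev t) ((e t).apply_symm_apply f)).trans (Subtype.ext ?_)⟩
    exact one_smul R y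
  · refine ⟨t, le_rfl, ?_⟩
    have : z = 0 := by
      refine (e t).map_eq_zero_iff.1 (Submodule.linearMap_qext _ (LinearMap.ext_ring ?_))
      exact congrArg (Submodule.subtype _) hz
    rw [this, map_zero]

variable [IsNoetherianRing R]

lemma finExt_gammaSubmodule {M : Type u} [AddCommGroup M] [Module R M]
    (h : ringKrullDim (R ⧸ 𝔞) ≤ 1 ∨ ringKrullDim R ≤ 2 ∨ arithRank 𝔞 ≤ 1)
    (hM : ∀ n, FinExt R (R ⧸ 𝔞) M n) (n : ℕ) : FinExt R (R ⧸ 𝔞) (gammaSubmodule 𝔞 M) n := by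
  refine FinExt.of_isTorsionIdeal h (isTorsionIdeal_gammaSubmodule 𝔞 M)
    (FinExt.of_injective_zero (Submodule.injective_subtype _) (hM 0)) ?_ n
  refine FinExt.left (exact_gammaSubmodule 𝔞 M) (Submodule.injective_subtype _)
    (Submodule.mkQ_surjective _) (FinExt.of_subsingleton ?_) (hM 1)
  exact subsingleton_ext_zero_of_gammaSubmodule_eq_bot (pow_one 𝔞).le
    gammaSubmodule_quotient_eq_bot

/-- The colimit of the modules `Ext^i(R/𝔞^t, M)` has finite `Ext` from `R/𝔞`. -/
lemma exists_isColimitExt (h : ringKrullDim (R ⧸ 𝔞) ≤ 1 ∨ ringKrullDim R ≤ 2 ∨ arithRank 𝔞 ≤ 1)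
    (i : ℕ) (M : Type u) [AddCommGroup M] [Module R M] (hM : ∀ n, FinExt R (R ⧸ 𝔞) M n) :
    ∃ (H : Type u) (_ : AddCommGroup H) (_ : Module R H),
      (∃ ι, IsColimitExt 𝔞 i (ModuleCat.of R M) H ι) ∧ IsTorsionIdeal 𝔞 H ∧
        ∀ n, FinExt R (R ⧸ 𝔞) H n := by
  induction i generalizing M with
  | zero => exact ⟨_, _, _, exists_isColimitExt_zero M, isTorsionIdeal_gammaSubmodule 𝔞 M,
      finExt_gammaSubmodule h hM⟩
  | succ i ih =>
    obtain ⟨I, f, hI, hf⟩ := exists_injective_linearMap (R := R) M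
    have hI' : Injective (ModuleCat.of R I) := hI
    let E := I ⧸ gammaSubmodule 𝔞 I
    have hE {𝔟 : Ideal R} {k : ℕ} (hk : 𝔞 ^ k ≤ 𝔟) (n : ℕ) : Subsingleton
      (Abelian.Ext (ModuleCat.of R (R ⧸ 𝔟)) (ModuleCat.of R E) n) :=
      subsingleton_ext_quotient_gammaSubmodule hk n
    let g : (M ⧸ gammaSubmodule 𝔞 M) →ₗ[R] E :=
      Submodule.mapQ _ _ f (comap_gammaSubmodule_of_injective hf).ge
    have hg : Function.Injective g := by
      rw [← LinearMap.ker_eq_bot, Submodule.ker_mapQ, comap_gammaSubmodule_of_injective hf,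
        Submodule.mkQ_map_self]
    have e : Function.Exact g (LinearMap.range g).mkQ := by rw [LinearMap.exact_iff]; simp
    have hN (n) : FinExt R (R ⧸ 𝔞) (M ⧸ gammaSubmodule 𝔞 M) n :=
      FinExt.right (exact_gammaSubmodule 𝔞 M) (Submodule.injective_subtype _)
        (Submodule.mkQ_surjective _) (hM n) (finExt_gammaSubmodule h hM (n + 1))
    have hL (n) : FinExt R (R ⧸ 𝔞) (E ⧸ LinearMap.range g) n :=
      FinExt.right e hg (Submodule.mkQ_surjective _)
        (FinExt.of_subsingleton (hE (pow_one 𝔞).le n)) (hN (n + 1))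
    obtain ⟨H, _, _, ⟨ι, hι⟩, hH, hfin⟩ := ih _ hL
    have hS := shortExact_shortComplexOfExact e hg (Submodule.mkQ_surjective _)
    obtain ⟨ι', hι'⟩ := IsColimitExt.of_shortExact_left hS (fun t ↦ hE le_rfl i)
      (fun t ↦ hE le_rfl (i + 1)) hι
    have hT := shortExact_shortComplexOfExact (exact_gammaSubmodule 𝔞 M)
      (Submodule.injective_subtype _) (Submodule.mkQ_surjective _)
    refine ⟨H, _, _, ?_, hH, hfin⟩
    exact IsColimitExt.of_shortExact_middle hT
      ((isTorsionIdeal_gammaSubmodule 𝔞 M).extVanishes i)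
      ((isTorsionIdeal_gammaSubmodule 𝔞 M).extVanishes (i + 1)) hι'

end Main

section LocalCohomology
open Abelian Limits Opposite
variable {R : Type u} [CommRing R] {𝔞 : Ideal R}

lemma IsColimitExt.nonempty_linearEquiv {i : ℕ} {M : ModuleCat.{u} R} {H : Type u}
    [AddCommGroup H] [Module R H]
    {ι : ∀ t : ℕ, Abelian.Ext (ModuleCat.of R (R ⧸ 𝔞 ^ t)) M i →ₗ[R] H}
    (hι : IsColimitExt 𝔞 i M H ι) : Nonempty ((localCohomology 𝔞 i).obj M ≃ₗ[R] H) := by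
  let F := localCohomology.diagram (localCohomology.idealPowersDiagram 𝔞) i
  let G : ℕᵒᵖᵒᵖ ⥤ ModuleCat.{u} R := F ⋙ (evaluation _ _).obj M
  let d (t : ℕᵒᵖᵒᵖ) : G.obj t ≃ₗ[R]
      Abelian.Ext (ModuleCat.of R (R ⧸ 𝔞 ^ t.unop.unop)) M i := derivedExtEquiv _ M i
  have hd {t s : ℕᵒᵖᵒᵖ} (f : t ⟶ s) (z : G.obj t) :
      d s ((G.map f).hom z) = powPull 𝔞 f.unop.unop.le M i (d t z) :=
    derivedExtEquiv_naturality
      ((localCohomology.ringModIdeals (localCohomology.idealPowersDiagram 𝔞)).map f.unop) M i z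
  let φ (t : ℕᵒᵖᵒᵖ) : G.obj t ⟶ ModuleCat.of R H :=
    ModuleCat.ofHom (ι t.unop.unop ∘ₗ (d t).toLinearMap)
  have hφ {t s : ℕᵒᵖᵒᵖ} (f : t ⟶ s) : G.map f ≫ φ s = φ t := by
    refine ModuleCat.hom_ext (LinearMap.ext fun z ↦ ?_)
    exact (congrArg (ι s.unop.unop) (hd f z)).trans (hι.map_powPull _ _)
  let c : Cocone G := ⟨ModuleCat.of R H, ⟨φ, fun t s f ↦ (hφ f).trans (Category.comp_id _).symm⟩⟩
  let ψ : colimit G ⟶ ModuleCat.of R H := colimit.desc G c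
  have hψ (t) (z : G.obj t) : ψ.hom ((colimit.ι G t).hom z) = ι t.unop.unop (d t z) :=
    LinearMap.congr_fun (congrArg ModuleCat.Hom.hom (colimit.ι_desc c t)) z
  have : PreservesFilteredColimitsOfSize.{0, 0} (forget (ModuleCat.{u} R)) :=
    preservesFilteredColimitsOfSize_shrink.{0, u, 0, u} _
  have hb : Function.Bijective ψ.hom := by
    refine ⟨(injective_iff_map_eq_zero _).2 fun x hx ↦ ?_, fun y ↦ ?_⟩
    · obtain ⟨t, z, rfl⟩ := Concrete.colimit_exists_rep G x
      obtain ⟨s, h, hs⟩ := hι.exists_powPull_eq_zero (d t z) ((hψ t z).symm.trans hx)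
      let f : t ⟶ op (op s) := (homOfLE h).op.op
      have h0 : (G.map f).hom z = 0 := (d _).map_eq_zero_iff.1 ((hd f z).trans hs)
      have hw : (colimit.ι G _).hom ((G.map f).hom z) = (colimit.ι G t).hom z :=
        LinearMap.congr_fun (congrArg ModuleCat.Hom.hom (colimit.w G f)) z
      rw [h0, map_zero] at hw
      exact hw.symm
    · obtain ⟨t, z, rfl⟩ := hι.exists_eq y
      refine ⟨(colimit.ι G (op (op t))).hom ((d (op (op t))).symm z), (hψ _ _).trans ?_⟩
      exact congrArg (ι t) ((d (op (op t))).apply_symm_apply z)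
  exact ⟨(colimitObjIsoColimitCompEvaluation F M).toLinearEquiv ≪≫ₗ LinearEquiv.ofBijective _ hb⟩

end LocalCohomology

section Cofinite
variable {R : Type u} [CommRing R] {𝔞 : Ideal R} {X : Type u} [AddCommGroup X] [Module R X]

lemma IsTorsionIdeal.support_subset (h : IsTorsionIdeal 𝔞 X) :
    Module.support R X ⊆ PrimeSpectrum.zeroLocus (𝔞 : Set R) := by
  intro p hp a ha
  obtain ⟨m, hm⟩ := Module.mem_support_iff'.1 hp
  obtain ⟨n, hn⟩ := h m
  by_contra hap
  exact hm (a ^ n) (fun h ↦ hap (p.2.mem_of_pow_mem n h)) (hn _ (Ideal.pow_mem_pow ha n))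

lemma finite_extIdeal_iff {M : ModuleCat.{u} R} {n : ℕ} :
    Module.Finite R (extIdeal 𝔞 n M) ↔ FinExt R (R ⧸ 𝔞) M n :=
  Module.Finite.equiv_iff (derivedExtEquiv (ModuleCat.of R (R ⧸ 𝔞)) M n)

lemma finite_associatedPrimes_of_finExt [IsNoetherianRing R] (h : IsTorsionIdeal 𝔞 X)
    (h0 : FinExt R (R ⧸ 𝔞) X 0) : (associatedPrimes R X).Finite := by
  have hfin : Module.Finite R (Submodule.torsionBySet R X 𝔞) := finExt_zero_iff.1 h0
  refine (associatedPrimes.finite R (Submodule.torsionBySet R X 𝔞)).subset fun p hp ↦ ?_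
  obtain ⟨hp, x, hx⟩ := isAssociatedPrime_iff.1 hp
  have hmem (r : R) : r ∈ p ↔ r • x = 0 := by rw [hx, Submodule.mem_colon_singleton]; rfl
  have hap : 𝔞 ≤ p := fun a ha ↦ by
    obtain ⟨n, hn⟩ := h x
    exact hp.mem_of_pow_mem n ((hmem _).2 (hn _ (Ideal.pow_mem_pow ha n)))
  refine isAssociatedPrime_iff.2 ⟨hp, ⟨x, ?_⟩, ?_⟩
  · exact (Submodule.mem_torsionBySet_iff _ _).2 fun a ↦ (hmem _).1 (hap a.2)
  · ext r
    rw [hmem, Submodule.mem_colon_singleton, Submodule.mem_bot, ← Submodule.coe_eq_zero]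
    rfl

end Cofinite

/-- Yang–Shen, Corollary 4.3(1) (module case): let `𝔞` be a proper ideal of a noetherian ring
`R` with `dim R/𝔞 ≤ 1`, or `dim R ≤ 2`, or `ara 𝔞 ≤ 1`, and let `M` be an `R`-module with
`Ext^i_R(R/𝔞, M)` finitely generated for all `i`. Then `H^i_𝔞(M)` is `𝔞`-cofinite for all `i`;
in particular, `Ass_R H^i_𝔞(M)` is finite for all `i`. -/
theorem localCohomology_isCofinite_and_associatedPrimes_finite
    {R : Type u} [CommRing R] [IsNoetherianRing R] (𝔞 : Ideal R) (ha : 𝔞 ≠ ⊤)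
    (hcase : ringKrullDim (R ⧸ 𝔞) ≤ 1 ∨ ringKrullDim R ≤ 2 ∨ arithRank 𝔞 ≤ 1)
    (M : ModuleCat.{u} R) (hext : ∀ i : ℕ, Module.Finite R (extIdeal 𝔞 i M)) :
    (∀ i : ℕ, IsCofinite 𝔞 ((localCohomology 𝔞 i).obj M)) ∧
      (∀ i : ℕ, (associatedPrimes R ((localCohomology 𝔞 i).obj M)).Finite) := by
  have key (i : ℕ) : IsTorsionIdeal 𝔞 ((localCohomology 𝔞 i).obj M) ∧
      ∀ n, FinExt R (R ⧸ 𝔞) ((localCohomology 𝔞 i).obj M) n := by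
    obtain ⟨H, _, _, ⟨ι, hι⟩, hH, hfin⟩ :=
      exists_isColimitExt hcase i M fun n ↦ finite_extIdeal_iff.1 (hext n)
    obtain ⟨e⟩ := hι.nonempty_linearEquiv
    exact ⟨hH.of_surjective e.symm.toLinearMap e.symm.surjective,
      fun n ↦ (hfin n).congr_right e.symm⟩
  exact ⟨fun i ↦ ⟨(key i).1.support_subset, fun n ↦ finite_extIdeal_iff.2 ((key i).2 n)⟩,
    fun i ↦ finite_associatedPrimes_of_finExt (key i).1 ((key i).2 0)⟩
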